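/- arXiv:2101.06183 — 5 statements merged into one kernel-verified Lean document; each statement's English description precedes it below -/
import Mathlib

section
/- Under Conditions (B1), (B2) and (B3), for every function u : (0,∞) → (0,∞) with u(t) → 1 as t → ∞, one has lim_{t→∞} R_n(u(t),t) · D(δ(t)) / D(u(t)δ(t)) = 0. -/
/-! Write `p_k(x) = d_k x^k / D(x)` for the masses of the power series distribution with
coefficients `d_k`. Since `d_m > 0` for some `m ≥ n`, the series `D` outgrows `x^k` for every
`k < n`, so that `p_k(x) → 0` as `x → ∞`. Scaling the parameter by `u` tilts the masses,
`p_k(ux) = p_k(x) u^k D(x) / D(ux)`. By (B3) the difference of the two weights in the `k`-th term of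
`R_n` is `O(p_k(δ(t)))`, so after multiplication by `D(δ(t)) / D(u(t)δ(t))` that term is
`O(p_k(u(t)δ(t)))`, and `u(t)δ(t) → ∞`. -/

open Filter Topology

/-- Series function `D_j(x) = ∑_{k≥0} d_{k,j} x^k`. -/
noncomputable def Dser (d : ℕ → ℕ → ℝ) (j : ℕ) (x : ℝ) : ℝ := ∑' k : ℕ, d k j * x ^ k

/-- Normalizing constant `∑_{j≥0} d_{j,j} (δ_j(t))^j / D_j(δ_j(t))`. -/
noncomputable def Znorm (d : ℕ → ℕ → ℝ) (δf : ℕ → ℝ → ℝ) (t : ℝ) : ℝ :=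
  ∑' j : ℕ, d j j * (δf j t) ^ j / Dser d j (δf j t)

/-- `P(N(t)=k)`. -/
noncomputable def pmfN (d : ℕ → ℕ → ℝ) (δf : ℕ → ℝ → ℝ) (t : ℝ) (k : ℕ) : ℝ :=
  (d k k * (δf k t) ^ k / Dser d k (δf k t)) / Znorm d δf t

/-- `E[N(t)]`. -/
noncomputable def meanN (d : ℕ → ℕ → ℝ) (δf : ℕ → ℝ → ℝ) (t : ℝ) : ℝ :=
  ∑' k : ℕ, (k : ℝ) * pmfN d δf t k

/-- `Λ(θ) = Δ(e^θ) - Δ(1)`. -/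
noncomputable def Lam (Δ : ℝ → ℝ) (θ : ℝ) : ℝ := Δ (Real.exp θ) - Δ 1

/-- The remainder `R_n(u,t)` (an empty sum when `n = 0`). -/
noncomputable def Rfun (n : ℕ) (d : ℕ → ℕ → ℝ) (δf : ℕ → ℝ → ℝ) (u t : ℝ) : ℝ :=
  ∑ k ∈ Finset.range n, (d k k * (u * δf k t) ^ k / Dser d k (δf k t)
    - d k n * (u * δf n t) ^ k / Dser d n (δf n t))

/-- Conditions (B1), (B2), (B3), together with the standing assumptions on the model:
nonnegative coefficients, convergent and positive series functions, positive and divergent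
functions `δ_j`. For `j ≥ n` one has `d_{k,j} = d_{k,n} =: d_k` and `δ_j = δ_n =: δ`. -/
structure PSCond (n : ℕ) (d : ℕ → ℕ → ℝ) (δf : ℕ → ℝ → ℝ) (v Δ : ℝ → ℝ) : Prop where
  d_nonneg : ∀ k j : ℕ, 0 ≤ d k j
  D_summable : ∀ j : ℕ, ∀ x : ℝ, 0 < x → Summable (fun k : ℕ => d k j * x ^ k)
  D_pos : ∀ j : ℕ, ∀ x : ℝ, 0 < x → 0 < Dser d j x
  delta_pos : ∀ j : ℕ, ∀ t : ℝ, 0 < t → 0 < δf j t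
  delta_tendsto : ∀ j : ℕ, Tendsto (δf j) atTop atTop
  B1_d : ∀ j : ℕ, n ≤ j → ∀ k : ℕ, d k j = d k n
  B1_delta : ∀ j : ℕ, n ≤ j → δf j = δf n
  v_pos : ∀ t : ℝ, 0 < t → 0 < v t
  v_tendsto : Tendsto v atTop atTop
  Delta_diff : ∀ u : ℝ, 0 < u → DifferentiableAt ℝ Δ u
  B1_lim : ∀ u : ℝ, 0 < u →
    Tendsto (fun t : ℝ => (v t)⁻¹ * Real.log (Dser d n (u * t))) atTop (𝓝 (Δ u))
  B2 : ∀ m : ℕ, ∃ k : ℕ, m ≤ k ∧ 0 < d k k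
  B3_lim : ∀ k : ℕ, k < n → 0 < d k n →
    Tendsto (fun t : ℝ => (d k k * (δf k t) ^ k / Dser d k (δf k t)) /
      (d k n * (δf n t) ^ k / Dser d n (δf n t))) atTop (𝓝 0)
  B3_zero : ∀ k : ℕ, k < n → d k n = 0 → d k k = 0

open Asymptotics

/-- The mass at `k` of the power series distribution with coefficients `(d_{i,j})_{i≥0}` and
parameter `x`, whose value is `0` where the series diverges or vanishes. -/
noncomputable def seriesMass (d : ℕ → ℕ → ℝ) (j k : ℕ) (x : ℝ) : ℝ := d k j * x ^ k / Dser d j x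

section PowerSeries

variable {d : ℕ → ℕ → ℝ} {j k m : ℕ} {x : ℝ}

theorem coeff_mul_pow_le_Dser (hd : ∀ i, 0 ≤ d i j) (hx : 0 ≤ x)
    (hs : Summable fun i ↦ d i j * x ^ i) (m : ℕ) : d m j * x ^ m ≤ Dser d j x :=
  hs.le_tsum m fun i _ ↦ mul_nonneg (hd i) (pow_nonneg hx i)

theorem Dser_pos (hd : ∀ i, 0 ≤ d i j) (hm : 0 < d m j) (hx : 0 < x)
    (hs : Summable fun i ↦ d i j * x ^ i) : 0 < Dser d j x :=
  (mul_pos hm (pow_pos hx m)).trans_le (coeff_mul_pow_le_Dser hd hx.le hs m)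

theorem isBigO_pow_Dser (hd : ∀ i, 0 ≤ d i j) (hm : 0 < d m j)
    (hs : ∀ᶠ x : ℝ in atTop, Summable fun i ↦ d i j * x ^ i) :
    (fun x : ℝ ↦ x ^ m) =O[atTop] Dser d j := by
  refine IsBigO.of_bound (d m j)⁻¹ ?_
  filter_upwards [hs, eventually_ge_atTop 0] with x hsx hx
  have hle : d m j * x ^ m ≤ Dser d j x := coeff_mul_pow_le_Dser hd hx hsx m
  rw [Real.norm_of_nonneg (pow_nonneg hx m), inv_mul_eq_div, le_div_iff₀' hm]
  exact hle.trans (Real.le_norm_self _)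

theorem isLittleO_pow_Dser (hd : ∀ i, 0 ≤ d i j) (hm : 0 < d m j) (hkm : k < m)
    (hs : ∀ᶠ x : ℝ in atTop, Summable fun i ↦ d i j * x ^ i) :
    (fun x : ℝ ↦ x ^ k) =o[atTop] Dser d j :=
  (isLittleO_pow_pow_atTop_of_lt hkm).trans_isBigO (isBigO_pow_Dser hd hm hs)

theorem tendsto_seriesMass_atTop (hd : ∀ i, 0 ≤ d i j) (hm : 0 < d m j) (hkm : k < m)
    (hs : ∀ᶠ x : ℝ in atTop, Summable fun i ↦ d i j * x ^ i) :
    Tendsto (seriesMass d j k) atTop (𝓝 0) :=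
  ((isLittleO_pow_Dser hd hm hkm hs).const_mul_left (d k j)).tendsto_div_nhds_zero

theorem seriesMass_mul_left (hx : Dser d j x ≠ 0) (u : ℝ) :
    seriesMass d j k (u * x) = seriesMass d j k x * (u ^ k * Dser d j x / Dser d j (u * x)) := by
  simp only [seriesMass, mul_pow]
  field_simp

end PowerSeries

theorem Rfun_eq_sum_seriesMass (n : ℕ) (d : ℕ → ℕ → ℝ) (δf : ℕ → ℝ → ℝ) (u t : ℝ) :
    Rfun n d δf u t = ∑ k ∈ Finset.range n,
      (seriesMass d k k (δf k t) - seriesMass d n k (δf n t)) * u ^ k :=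
  Finset.sum_congr rfl fun k _ ↦ by simp only [seriesMass]; ring

section Remainder

variable {α : Type*} {l : Filter α} {d : ℕ → ℕ → ℝ} {j k m n : ℕ} {δ u : α → ℝ}

theorem isBigO_sub_seriesMass_mul_tilt {w : α → ℝ} (hD : ∀ᶠ t in l, Dser d j (δ t) ≠ 0)
    (hw : w =O[l] fun t ↦ seriesMass d j k (δ t)) :
    (fun t ↦ (w t - seriesMass d j k (δ t)) *
      (u t ^ k * Dser d j (δ t) / Dser d j (u t * δ t))) =O[l]
      fun t ↦ seriesMass d j k (u t * δ t) := by
  have hsub : (fun t ↦ w t - seriesMass d j k (δ t)) =O[l] fun t ↦ seriesMass d j k (δ t) :=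
    hw.sub (isBigO_refl _ l)
  refine (hsub.mul (isBigO_refl _ l)).congr' .rfl ?_
  filter_upwards [hD] with t ht
  exact (seriesMass_mul_left ht (u t)).symm

theorem Rn_ratio_limit_of_tendsto_one_general {w : ℕ → α → ℝ} (hd : ∀ i, 0 ≤ d i j)
    (hs : ∀ x : ℝ, 0 < x → Summable fun i ↦ d i j * x ^ i) (hm : 0 < d m j) (hnm : n ≤ m)
    (hδ : ∀ᶠ t in l, 0 < δ t) (huδ : Tendsto (fun t ↦ u t * δ t) l atTop)
    (hw : ∀ k < n, w k =O[l] fun t ↦ seriesMass d j k (δ t)) :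
    Tendsto (fun t ↦ (∑ k ∈ Finset.range n, (w k t - seriesMass d j k (δ t)) * u t ^ k) *
      Dser d j (δ t) / Dser d j (u t * δ t)) l (𝓝 0) := by
  have hD : ∀ᶠ t in l, Dser d j (δ t) ≠ 0 :=
    hδ.mono fun t ht ↦ (Dser_pos hd hm ht (hs _ ht)).ne'
  have hterm : ∀ k ∈ Finset.range n, Tendsto (fun t ↦ (w k t - seriesMass d j k (δ t)) *
      (u t ^ k * Dser d j (δ t) / Dser d j (u t * δ t))) l (𝓝 0) := fun k hk ↦ by
    have hkn : k < n := Finset.mem_range.1 hk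
    have hmass : Tendsto (fun t ↦ seriesMass d j k (u t * δ t)) l (𝓝 0) :=
      (tendsto_seriesMass_atTop hd hm (hkn.trans_le hnm)
        ((eventually_gt_atTop 0).mono hs)).comp huδ
    exact (isBigO_sub_seriesMass_mul_tilt hD (hw k hkn)).trans_tendsto hmass
  simpa only [Finset.sum_const_zero, Finset.sum_mul, Finset.sum_div, mul_assoc, mul_div_assoc]
    using tendsto_finsetSum _ hterm

end Remainder

namespace PSCond

variable {n : ℕ} {d : ℕ → ℕ → ℝ} {δf : ℕ → ℝ → ℝ} {v Δ : ℝ → ℝ}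

theorem exists_coeff_pos (h : PSCond n d δf v Δ) : ∃ m, n ≤ m ∧ 0 < d m n := by
  obtain ⟨m, hnm, hm⟩ := h.B2 n
  exact ⟨m, hnm, h.B1_d m hnm m ▸ hm⟩

theorem isLittleO_seriesMass (h : PSCond n d δf v Δ) {k : ℕ} (hk : k < n) :
    (fun t ↦ seriesMass d k k (δf k t)) =o[atTop] fun t ↦ seriesMass d n k (δf n t) := by
  rcases (h.d_nonneg k n).eq_or_lt' with hzero | hpos
  · simp [seriesMass, hzero, h.B3_zero k hk hzero]
  · refine (isLittleO_iff_tendsto' ?_).2 (h.B3_lim k hk hpos)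
    filter_upwards [eventually_gt_atTop 0] with t ht hmass
    have hδ : 0 < δf n t := h.delta_pos n t ht
    exact absurd hmass (div_pos (mul_pos hpos (pow_pos hδ k)) (h.D_pos n _ hδ)).ne'

end PSCond

/-- From the proof of Proposition 3.2: under Conditions (B1), (B2), (B3), for every function
`u(t) → 1` as `t → ∞`, `R_n(u(t),t) · D(δ(t))/D(u(t)δ(t)) → 0` as `t → ∞`. -/
theorem Rn_ratio_limit_of_tendsto_one
    (n : ℕ) (d : ℕ → ℕ → ℝ) (δf : ℕ → ℝ → ℝ) (v Δ : ℝ → ℝ)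
    (hcond : PSCond n d δf v Δ) :
    ∀ u : ℝ → ℝ, (∀ t : ℝ, 0 < t → 0 < u t) → Tendsto u atTop (𝓝 1) →
      Tendsto (fun t : ℝ => Rfun n d δf (u t) t * Dser d n (δf n t) / Dser d n (u t * δf n t))
        atTop (𝓝 0) := by
  intro u _ hu1
  obtain ⟨m, hnm, hm⟩ := hcond.exists_coeff_pos
  simp only [Rfun_eq_sum_seriesMass]
  exact Rn_ratio_limit_of_tendsto_one_general (hcond.d_nonneg · n) (hcond.D_summable n) hm hnm
    ((hcond.delta_tendsto n).eventually_gt_atTop 0)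
    (hu1.pos_mul_atTop one_pos (hcond.delta_tendsto n))
    fun k hk ↦ (hcond.isLittleO_seriesMass hk).isBigO
end

section
/- Assume Conditions (B1), (B2) and (B3), that Λ(θ) := Δ(e^θ) − Δ(1) is differentiable at 0, and that lim_{t→∞} E[N(t)]/v(δ(t)) = Λ'(0). Then for every θ ∈ ℝ one has lim_{t→∞} (1/v(δ(t))) log E[ exp( θ (N(t) − E[N(t)]) ) ] = Λ(θ) − θΛ'(0). -/
open Filter Topology

/-!
For `k ≥ n` the weights of `N(t)` are `d_k δ(t)^k / D(δ(t))`, and (B3) keeps each of the first `n`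
weights of the order of `δ(t)^k / D(δ(t))`. Since `D` has a positive coefficient of index at least
`n`, changing finitely many of its terms by multiples of `x^k`, `k < n`, does not affect its leading
asymptotics. Hence `E[u^{N(t)}] ~ D(uδ(t)) / D(δ(t))` for every `u > 0`, and taking logarithms with
`u = e^θ` reduces everything to (B1). Centering only contributes the factor `e^{-θ E[N(t)]}`.
-/

open Asymptotics

theorem hasSum_of_eq_off_finset {ι M : Type*} [AddCommGroup M] [TopologicalSpace M]
    [ContinuousAdd M] {f g : ι → M} {b : M} {s : Finset ι} (hg : HasSum g b)
    (h : ∀ i ∉ s, f i = g i) : HasSum f (b + ∑ i ∈ s, (f i - g i)) := by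
  have hdiff : HasSum (fun i => f i - g i) (∑ i ∈ s, (f i - g i)) :=
    hasSum_sum_of_ne_finset_zero fun i hi => sub_eq_zero.2 (h i hi)
  simpa only [add_sub_cancel] using hg.add hdiff

theorem tendsto_log_sub_log_of_isEquivalent {α : Type*} {l : Filter α} {f g : α → ℝ}
    (h : f ~[l] g) : Tendsto (fun t => Real.log (f t) - Real.log (g t)) l (𝓝 0) := by
  obtain ⟨φ, hφ, hfg⟩ := h.exists_eq_mul
  have hlog : Tendsto (fun t => ‖Real.log (φ t)‖) l (𝓝 0) := by
    simpa using (hφ.log one_ne_zero).norm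
  refine squeeze_zero_norm' ?_ hlog
  filter_upwards [hfg, hφ.eventually_ne one_ne_zero] with t heq hne
  rw [heq, Pi.mul_apply]
  rcases eq_or_ne (g t) 0 with hzero | hg
  · simp [hzero]
  · rw [Real.log_mul hne hg, add_sub_cancel_right]

theorem tsum_exp_mul_sub_mul_div (w : ℕ → ℝ) (Z θ c : ℝ) :
    ∑' k : ℕ, Real.exp (θ * ((k : ℝ) - c)) * (w k / Z) =
      Real.exp (-(θ * c)) * ((∑' k, Real.exp θ ^ k * w k) / Z) := by
  rw [← tsum_div_const, ← tsum_mul_left]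
  refine tsum_congr fun k => ?_
  have hexp : Real.exp (θ * ((k : ℝ) - c)) = Real.exp (-(θ * c)) * Real.exp θ ^ k := by
    rw [← Real.exp_nat_mul, ← Real.exp_add]
    ring_nf
  rw [hexp]
  ring

section PowerSeries

/-- The sum `∑_{k ≥ 0} a_k x^k` of the power series with coefficients `a`. With the
coefficients `a_k = d_{k,n}` it is the function `D` of (B1). -/
noncomputable def seriesSum (a : ℕ → ℝ) (x : ℝ) : ℝ := ∑' k, a k * x ^ k

variable {a : ℕ → ℝ}

theorem monomial_le_seriesSum (ha : ∀ k, 0 ≤ a k) {x : ℝ} (hx : 0 ≤ x)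
    (hsum : Summable fun k => a k * x ^ k) (m : ℕ) : a m * x ^ m ≤ seriesSum a x :=
  hsum.le_tsum m fun k _ => mul_nonneg (ha k) (pow_nonneg hx k)

theorem seriesSum_pos (ha : ∀ k, 0 ≤ a k) {x : ℝ} (hx : 0 < x)
    (hsum : Summable fun k => a k * x ^ k) {m : ℕ} (hm : 0 < a m) : 0 < seriesSum a x :=
  (mul_pos hm (pow_pos hx m)).trans_le (monomial_le_seriesSum ha hx.le hsum m)

theorem pow_isLittleO_seriesSum (ha : ∀ k, 0 ≤ a k)
    (hsum : ∀ x : ℝ, 0 < x → Summable fun k => a k * x ^ k) {k m : ℕ} (hm : 0 < a m)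
    (hk : k < m) : (fun x : ℝ => x ^ k) =o[atTop] seriesSum a := by
  refine (isLittleO_pow_pow_atTop_of_lt hk).trans_isBigO (.of_bound (a m)⁻¹ ?_)
  filter_upwards [eventually_gt_atTop 0] with x hx
  rw [Real.norm_of_nonneg (pow_nonneg hx.le m),
    Real.norm_of_nonneg (seriesSum_pos ha hx (hsum x hx) hm).le, le_inv_mul_iff₀ hm]
  exact monomial_le_seriesSum ha hx.le (hsum x hx) m

end PowerSeries

section Weights

/-- The weights `w t` on `ℕ` follow the power series with coefficients `a` at the point `x t`, up
to the common factor `r t`, except for the first `n` of them, of which only the order of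
magnitude is controlled. Conditions (B1), (B2) and (B3) provide such weights with `x t = δ(t)` and
`r t = 1 / D(δ(t))`. -/
structure IsPowerSeriesWeight {ι : Type*} (l : Filter ι) (n : ℕ) (a : ℕ → ℝ) (x r : ι → ℝ)
    (w : ι → ℕ → ℝ) : Prop where
  coeff_nonneg : ∀ k, 0 ≤ a k
  summable : ∀ y : ℝ, 0 < y → Summable fun k => a k * y ^ k
  exists_coeff_pos : ∃ m, n ≤ m ∧ 0 < a m
  tendsto_point : Tendsto x l atTop
  factor_ne_zero : ∀ᶠ t in l, r t ≠ 0
  head : ∀ k < n, (fun t => w t k) =O[l] fun t => r t * x t ^ k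
  tail : ∀ᶠ t in l, ∀ k, n ≤ k → w t k = r t * (a k * x t ^ k)

variable {ι : Type*} {l : Filter ι} {n : ℕ} {a : ℕ → ℝ} {x r s c : ι → ℝ} {w : ι → ℕ → ℝ}

namespace IsPowerSeriesWeight

protected theorem seriesSum_pos (hw : IsPowerSeriesWeight l n a x r w) {y : ℝ} (hy : 0 < y) :
    0 < seriesSum a y := by
  obtain ⟨m, -, hm⟩ := hw.exists_coeff_pos
  exact seriesSum_pos hw.coeff_nonneg hy (hw.summable y hy) hm

theorem pow_isLittleO (hw : IsPowerSeriesWeight l n a x r w) {u : ℝ} (hu : 0 < u) {k : ℕ}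
    (hk : k < n) :
    (fun t => r t * (u * x t) ^ k) =o[l] fun t => r t * seriesSum a (u * x t) := by
  obtain ⟨m, hnm, hm⟩ := hw.exists_coeff_pos
  have hpow := pow_isLittleO_seriesSum hw.coeff_nonneg hw.summable hm (hk.trans_le hnm)
  exact (isBigO_refl r l).mul_isLittleO
    (hpow.comp_tendsto (hw.tendsto_point.const_mul_atTop hu))

theorem head_sub_isLittleO (hw : IsPowerSeriesWeight l n a x r w) {u : ℝ} (hu : 0 < u) {k : ℕ}
    (hk : k < n) :
    (fun t => u ^ k * w t k - r t * (a k * (u * x t) ^ k)) =o[l]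
      fun t => r t * seriesSum a (u * x t) := by
  have hweight : (fun t => u ^ k * w t k) =O[l] fun t => r t * (u * x t) ^ k := by
    simpa only [mul_pow, mul_left_comm] using (isBigO_refl (fun _ => u ^ k) l).mul (hw.head k hk)
  have hterm : (fun t => r t * (a k * (u * x t) ^ k)) =O[l] fun t => r t * (u * x t) ^ k := by
    simpa only [mul_left_comm] using
      (isBigO_refl (fun t => r t * (u * x t) ^ k) l).const_mul_left (a k)
  exact (hweight.sub hterm).trans_isLittleO (hw.pow_isLittleO hu hk)

theorem tsum_pow_mul_isEquivalent (hw : IsPowerSeriesWeight l n a x r w) {u : ℝ} (hu : 0 < u) :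
    (fun t => ∑' k, u ^ k * w t k) ~[l] fun t => r t * seriesSum a (u * x t) := by
  refine (IsLittleO.fun_sum fun k hk =>
    hw.head_sub_isLittleO hu (Finset.mem_range.1 hk)).congr' ?_ .rfl
  filter_upwards [hw.tail, (hw.tendsto_point.const_mul_atTop hu).eventually_gt_atTop 0]
    with t htail hpos
  have heq : ∀ k ∉ Finset.range n, u ^ k * w t k = r t * (a k * (u * x t) ^ k) := by
    intro k hk
    rw [htail k (by simpa using hk), mul_pow]
    ring
  have hseries := (hw.summable _ hpos).hasSum.mul_left (r t)
  exact eq_sub_of_add_eq' (hasSum_of_eq_off_finset hseries heq).tsum_eq.symm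

theorem tsum_pow_mul_div_isEquivalent (hw : IsPowerSeriesWeight l n a x r w) {u : ℝ}
    (hu : 0 < u) :
    (fun t => (∑' k, u ^ k * w t k) / ∑' k, w t k) ~[l]
      fun t => seriesSum a (u * x t) / seriesSum a (x t) := by
  have htotal := hw.tsum_pow_mul_isEquivalent one_pos
  simp only [one_pow, one_mul] at htotal
  refine ((hw.tsum_pow_mul_isEquivalent hu).div htotal).congr_right ?_
  filter_upwards [hw.factor_ne_zero] with t ht using mul_div_mul_left _ _ ht

theorem eventually_tsum_pow_mul_div_ne_zero (hw : IsPowerSeriesWeight l n a x r w) {u : ℝ}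
    (hu : 0 < u) : ∀ᶠ t in l, (∑' k, u ^ k * w t k) / ∑' k, w t k ≠ 0 := by
  filter_upwards [(hw.tsum_pow_mul_div_isEquivalent hu).isTheta.eq_zero_iff,
    hw.tendsto_point.eventually_gt_atTop 0] with t hiff ht
  exact mt hiff.1 (div_pos (hw.seriesSum_pos (mul_pos hu ht)) (hw.seriesSum_pos ht)).ne'

theorem tendsto_log_tsum_pow_mul_div (hw : IsPowerSeriesWeight l n a x r w)
    (hs : Tendsto s l atTop) {u A B : ℝ} (hu : 0 < u)
    (hA : Tendsto (fun t => (s t)⁻¹ * Real.log (seriesSum a (u * x t))) l (𝓝 A))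
    (hB : Tendsto (fun t => (s t)⁻¹ * Real.log (seriesSum a (x t))) l (𝓝 B)) :
    Tendsto (fun t => (s t)⁻¹ * Real.log ((∑' k, u ^ k * w t k) / ∑' k, w t k)) l
      (𝓝 (A - B)) := by
  have herror := hs.inv_tendsto_atTop.mul
    (tendsto_log_sub_log_of_isEquivalent (hw.tsum_pow_mul_div_isEquivalent hu))
  have hlim := herror.add (hA.sub hB)
  rw [mul_zero, zero_add] at hlim
  refine hlim.congr' ?_
  filter_upwards [hw.tendsto_point.eventually_gt_atTop 0] with t ht
  rw [Real.log_div (hw.seriesSum_pos (mul_pos hu ht)).ne' (hw.seriesSum_pos ht).ne',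
    Pi.inv_apply]
  ring

end IsPowerSeriesWeight

theorem limit_log_centered_mgf_general (hw : IsPowerSeriesWeight l n a x r w)
    (hs : Tendsto s l atTop) {Δ : ℝ → ℝ}
    (hΔ : ∀ u : ℝ, 0 < u →
      Tendsto (fun t => (s t)⁻¹ * Real.log (seriesSum a (u * x t))) l (𝓝 (Δ u)))
    {μ : ℝ} (hc : Tendsto (fun t => c t / s t) l (𝓝 μ)) (θ : ℝ) :
    Tendsto (fun t => (s t)⁻¹ *
        Real.log (∑' k : ℕ, Real.exp (θ * ((k : ℝ) - c t)) * (w t k / ∑' j, w t j))) l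
      (𝓝 (Lam Δ θ - θ * μ)) := by
  have hu := Real.exp_pos θ
  have hone := by simpa only [one_mul] using hΔ 1 one_pos
  refine ((hw.tendsto_log_tsum_pow_mul_div hs hu (hΔ _ hu) hone).sub
    (hc.const_mul θ)).congr' ?_
  filter_upwards [hw.eventually_tsum_pow_mul_div_ne_zero hu] with t hne
  rw [tsum_exp_mul_sub_mul_div, Real.log_mul (Real.exp_ne_zero _) hne, Real.log_exp]
  ring

end Weights

/-- The unnormalized probability that `N(t) = k`: `pmfN` is `weightN` divided by its total mass
`Znorm`. -/
noncomputable def weightN (d : ℕ → ℕ → ℝ) (δf : ℕ → ℝ → ℝ) (t : ℝ) (k : ℕ) : ℝ :=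
  d k k * δf k t ^ k / Dser d k (δf k t)

namespace PSCond

variable {n : ℕ} {d : ℕ → ℕ → ℝ} {δf : ℕ → ℝ → ℝ} {v Δ : ℝ → ℝ}

theorem Dser_delta_pos (h : PSCond n d δf v Δ) {t : ℝ} (ht : 0 < t) : 0 < Dser d n (δf n t) :=
  h.D_pos n _ (h.delta_pos n t ht)

theorem weightN_eq_of_le (h : PSCond n d δf v Δ) (t : ℝ) {k : ℕ} (hk : n ≤ k) :
    weightN d δf t k = (Dser d n (δf n t))⁻¹ * (d k n * δf n t ^ k) := by
  have hD : Dser d k = Dser d n := by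
    funext y
    simp only [Dser, h.B1_d k hk]
  rw [weightN, hD, h.B1_d k hk, h.B1_delta k hk, div_eq_inv_mul]

theorem weightN_isBigO_of_lt (h : PSCond n d δf v Δ) {k : ℕ} (hk : k < n) :
    (fun t => weightN d δf t k) =O[atTop] fun t => (Dser d n (δf n t))⁻¹ * δf n t ^ k := by
  rcases (h.d_nonneg k n).eq_or_lt with hzero | hpos
  · simpa [weightN, h.B3_zero k hk hzero.symm] using isBigO_zero _ _
  · have hne : ∀ᶠ t in atTop, d k n * δf n t ^ k / Dser d n (δf n t) ≠ 0 := by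
      filter_upwards [eventually_gt_atTop 0] with t ht
      exact (div_pos (mul_pos hpos (pow_pos (h.delta_pos n t ht) k)) (h.Dser_delta_pos ht)).ne'
    have hlittle : (fun t => weightN d δf t k) =o[atTop]
        fun t => d k n * δf n t ^ k / Dser d n (δf n t) :=
      (isLittleO_iff_tendsto' (hne.mono fun _ ht hzero => absurd hzero ht)).2 (h.B3_lim k hk hpos)
    have hconst := (isBigO_refl (fun t => (Dser d n (δf n t))⁻¹ * δf n t ^ k)
      atTop).const_mul_left (d k n)
    refine hlittle.isBigO.trans (hconst.congr_left fun t => ?_)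
    ring

theorem isPowerSeriesWeight (h : PSCond n d δf v Δ) :
    IsPowerSeriesWeight atTop n (d · n) (δf n) (fun t => (Dser d n (δf n t))⁻¹)
      (weightN d δf) where
  coeff_nonneg k := h.d_nonneg k n
  summable := h.D_summable n
  exists_coeff_pos := by
    obtain ⟨m, hnm, hm⟩ := h.B2 n
    exact ⟨m, hnm, h.B1_d m hnm m ▸ hm⟩
  tendsto_point := h.delta_tendsto n
  factor_ne_zero := (eventually_gt_atTop 0).mono fun _ ht => inv_ne_zero (h.Dser_delta_pos ht).ne'
  head _ hk := h.weightN_isBigO_of_lt hk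
  tail := .of_forall fun t _ hk => h.weightN_eq_of_le t hk

end PSCond

/-- Remark 3.3 of the paper: under Conditions (B1), (B2), (B3), if `Λ` is differentiable at `0`
and `E[N(t)]/v(δ(t)) → Λ'(0)`, then for all `θ ∈ ℝ`,
`(1/v(δ(t))) log E[exp(θ(N(t)-E[N(t)]))] → Λ(θ) - θΛ'(0)`. -/
theorem limit_log_centered_mgf
    (n : ℕ) (d : ℕ → ℕ → ℝ) (δf : ℕ → ℝ → ℝ) (v Δ : ℝ → ℝ)
    (hcond : PSCond n d δf v Δ)
    (hZsum : ∀ t : ℝ, 0 < t →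
      Summable (fun j : ℕ => d j j * (δf j t) ^ j / Dser d j (δf j t)))
    (hZpos : ∀ t : ℝ, 0 < t → 0 < Znorm d δf t)
    (hLamDiff : DifferentiableAt ℝ (Lam Δ) 0)
    (hmean : Tendsto (fun t : ℝ => meanN d δf t / v (δf n t)) atTop (𝓝 (deriv (Lam Δ) 0))) :
    ∀ θ : ℝ,
      Tendsto (fun t : ℝ => (v (δf n t))⁻¹ *
          Real.log (∑' k : ℕ, Real.exp (θ * ((k : ℝ) - meanN d δf t)) * pmfN d δf t k))
        atTop (𝓝 (Lam Δ θ - θ * deriv (Lam Δ) 0)) :=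
  limit_log_centered_mgf_general hcond.isPowerSeriesWeight
    (hcond.v_tendsto.comp (hcond.delta_tendsto n))
    (fun u hu => (hcond.B1_lim u hu).comp (hcond.delta_tendsto n)) hmean
end

section
/- For every α ∈ (0,1], β, γ, λ > 0 and every u > 0, one has lim_{t→∞} t^{−1/α} log E^γ_{α,β}(λ u t) = (λu)^{1/α}. -/
open Filter Topology

/-- The Prabhakar (three-parameter Mittag-Leffler) function
`E^γ_{α,β}(u) = ∑_{k≥0} u^k (γ)_k / (k! Γ(αk+β))`. -/
noncomputable def prabhakar (α β γ : ℝ) (u : ℝ) : ℝ :=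
  ∑' k : ℕ, u ^ k * Polynomial.eval γ (ascPochhammer ℝ k)
    / ((k.factorial : ℝ) * Real.Gamma (α * (k : ℝ) + β))

/-!
Put `u = z ^ α`, `s = α k + β` and `1 / Γ(s) = s / Γ(s + 1)`: the `k`-th term of the series is
`z ^ (-β)` times a weight of polynomial growth in `k` times `z ^ s / Γ(s + 1)`. Every factor
`z ^ s / Γ(s + 1)` is at most `r ^ (-s) * exp (r * z)`, for any `r > 1`, and the powers of `r`
make the sum over `k` converge; the one factor with `s` just below `z - 1` is already of order
`exp z / z`. Hence `log E(z ^ α) ~ z`, and the claim is the case `z = (λ u t) ^ (1 / α)`.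
-/

open MeasureTheory Set
open Ring (multichoose)

section GammaBounds

variable {r s z : ℝ}

lemma rpow_mul_exp_neg_le_Gamma_add_one (hs : 0 ≤ s) (hz : 0 ≤ z) :
    z ^ s * Real.exp (-z) ≤ Real.Gamma (s + 1) := by
  have integrable := Real.GammaIntegral_convergent (s := s + 1) (by linarith)
  rw [Real.Gamma_eq_integral (by linarith)]
  simp only [add_sub_cancel_right] at integrable ⊢
  have tail_subset : Ioi z ⊆ Ioi 0 := Ioi_subset_Ioi hz
  calc z ^ s * Real.exp (-z) = ∫ x in Ioi z, z ^ s * Real.exp (-x) := by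
        rw [integral_const_mul, integral_exp_neg_Ioi]
    _ ≤ ∫ x in Ioi z, Real.exp (-x) * x ^ s := by
        refine setIntegral_mono_on ((integrableOn_exp_neg_Ioi z).const_mul _)
          (integrable.mono_set tail_subset) measurableSet_Ioi fun x hx ↦ ?_
        rw [mul_comm]
        gcongr
        exact hx.le
    _ ≤ ∫ x in Ioi 0, Real.exp (-x) * x ^ s := by
        refine setIntegral_mono_set integrable ?_ tail_subset.eventuallyLE
        filter_upwards [self_mem_ae_restrict measurableSet_Ioi] with x hx
        exact mul_nonneg (Real.exp_nonneg _) (Real.rpow_nonneg (le_of_lt hx) s)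

lemma rpow_le_rpow_mul_exp {x : ℝ} (hs : 0 ≤ s) (hx : 0 < x) (hz : 0 < z) :
    x ^ s ≤ z ^ s * Real.exp (s * (x / z - 1)) := by
  have hxz : 0 < x / z := div_pos hx hz
  calc x ^ s = z ^ s * (x / z) ^ s := by
        rw [← Real.mul_rpow hz.le hxz.le, mul_div_cancel₀ x hz.ne']
    _ = z ^ s * Real.exp (s * Real.log (x / z)) := by
        rw [Real.rpow_def_of_pos hxz, mul_comm s]
    _ ≤ z ^ s * Real.exp (s * (x / z - 1)) := by
        gcongr
        exact Real.log_le_sub_one_of_pos hxz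

lemma Gamma_add_one_le_rpow_mul_exp_neg_div (hs : 0 ≤ s) (hsz : s < z) :
    Real.Gamma (s + 1) ≤ z ^ (s + 1) * Real.exp (-s) / (z - s) := by
  have hz : 0 < z := hs.trans_lt hsz
  have rate_neg : -(1 - s / z) < 0 := by
    rw [neg_lt_zero, sub_pos, div_lt_one hz]
    exact hsz
  have integrable := Real.GammaIntegral_convergent (s := s + 1) (by linarith)
  rw [Real.Gamma_eq_integral (by linarith)]
  simp only [add_sub_cancel_right] at integrable ⊢
  calc ∫ x in Ioi 0, Real.exp (-x) * x ^ s
      ≤ ∫ x in Ioi 0, z ^ s * Real.exp (-s) * Real.exp (-(1 - s / z) * x) := by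
        refine setIntegral_mono_on integrable
          ((integrableOn_exp_mul_Ioi rate_neg 0).const_mul _) measurableSet_Ioi fun x hx ↦ ?_
        calc Real.exp (-x) * x ^ s ≤ Real.exp (-x) * (z ^ s * Real.exp (s * (x / z - 1))) := by
              gcongr
              exact rpow_le_rpow_mul_exp hs hx hz
          _ = z ^ s * Real.exp (-s) * Real.exp (-(1 - s / z) * x) := by
              rw [mul_left_comm, mul_assoc, ← Real.exp_add, ← Real.exp_add]
              ring_nf
    _ = z ^ (s + 1) * Real.exp (-s) / (z - s) := by
        have hzs : z - s ≠ 0 := (sub_pos.2 hsz).ne'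
        rw [integral_const_mul, integral_exp_mul_Ioi rate_neg, mul_zero, Real.exp_zero,
          neg_div_neg_eq, Real.rpow_add_one hz.ne', one_sub_div hz.ne']
        field_simp

lemma rpow_div_Gamma_add_one_le (hr : 0 < r) (hs : 0 ≤ s) (hz : 0 ≤ z) :
    z ^ s / Real.Gamma (s + 1) ≤ r ^ (-s) * Real.exp (r * z) := by
  rw [div_le_iff₀ (Real.Gamma_pos_of_pos (by linarith))]
  calc z ^ s = r ^ (-s) * Real.exp (r * z) * ((r * z) ^ s * Real.exp (-(r * z))) := by
        rw [Real.mul_rpow hr.le hz, Real.rpow_neg hr.le, Real.exp_neg]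
        field_simp
    _ ≤ r ^ (-s) * Real.exp (r * z) * Real.Gamma (s + 1) := by
        gcongr
        exact rpow_mul_exp_neg_le_Gamma_add_one hs (by positivity)

lemma exp_div_le_rpow_div_Gamma_add_one (hs : 0 ≤ s) (hsz : s + 1 ≤ z) :
    Real.exp s / z ≤ z ^ s / Real.Gamma (s + 1) := by
  have hz : 0 < z := by linarith
  rw [div_le_div_iff₀ hz (Real.Gamma_pos_of_pos (by linarith)), ← Real.rpow_add_one hz.ne']
  have Gamma_le : Real.Gamma (s + 1) ≤ z ^ (s + 1) * Real.exp (-s) :=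
    (Gamma_add_one_le_rpow_mul_exp_neg_div hs (by linarith)).trans
      (div_le_self (by positivity) (by linarith))
  calc Real.exp s * Real.Gamma (s + 1) ≤ Real.exp s * (z ^ (s + 1) * Real.exp (-s)) := by gcongr
    _ = z ^ (s + 1) := by
        rw [mul_left_comm, ← Real.exp_add, add_neg_cancel, Real.exp_zero, mul_one]

end GammaBounds

section Multichoose

lemma multichoose_eq_eval_ascPochhammer_div_factorial {K : Type*} [Field K] [CharZero K]
    [BinomialRing K] (x : K) (k : ℕ) :
    multichoose x k = (ascPochhammer K k).eval x / (k.factorial : K) := by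
  rw [eq_div_iff (Nat.cast_ne_zero.2 k.factorial_ne_zero), mul_comm, ← nsmul_eq_mul,
    Ring.factorial_nsmul_multichoose_eq_ascPochhammer, Polynomial.ascPochhammer_smeval_eq_eval]

lemma succ_mul_multichoose_succ {K : Type*} [Field K] [CharZero K] [BinomialRing K]
    (x : K) (k : ℕ) :
    ((k : K) + 1) * multichoose x (k + 1) = x * multichoose (x + 1) k := by
  have hk : (k : K) + 1 ≠ 0 := k.cast_add_one_ne_zero
  simp only [multichoose_eq_eval_ascPochhammer_div_factorial, ascPochhammer_succ_left,
    Polynomial.eval_mul, Polynomial.eval_X, Polynomial.eval_comp, Polynomial.eval_add,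
    Polynomial.eval_one, Nat.factorial_succ, Nat.cast_mul, Nat.cast_succ]
  field_simp

variable {x : ℝ}

lemma multichoose_pos (hx : 0 < x) (k : ℕ) : 0 < multichoose x k := by
  rw [multichoose_eq_eval_ascPochhammer_div_factorial]
  exact div_pos (ascPochhammer_pos k x hx) (Nat.cast_pos.2 k.factorial_pos)

lemma one_le_multichoose_add_one (hx : 0 < x) (k : ℕ) : 1 ≤ multichoose (x + 1) k := by
  induction k with
  | zero => rw [Ring.multichoose_zero_right]
  | succ k ih =>
    rw [Ring.multichoose_succ_succ]
    linarith [multichoose_pos hx (k + 1)]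

lemma min_le_linear_mul_multichoose {a b : ℝ} (ha : 0 ≤ a) (hb : 0 ≤ b) (hx : 0 < x) (k : ℕ) :
    min b (a * x) ≤ (a * k + b) * multichoose x k := by
  cases k with
  | zero => simp
  | succ k =>
    calc min b (a * x) ≤ a * x * 1 := by simp
      _ ≤ a * x * multichoose (x + 1) k := by
          gcongr
          exact one_le_multichoose_add_one hx k
      _ = a * ((k + 1 : ℕ) : ℝ) * multichoose x (k + 1) := by
          rw [mul_assoc, ← succ_mul_multichoose_succ, Nat.cast_succ, mul_assoc]
      _ ≤ (a * ((k + 1 : ℕ) : ℝ) + b) * multichoose x (k + 1) := by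
          have := multichoose_pos hx (k + 1)
          gcongr
          linarith

lemma summable_multichoose_mul_pow (x : ℝ) {q : ℝ} (hq : |q| < 1) :
    Summable fun k ↦ multichoose x k * q ^ k := by
  have mem_ball : q ∈ Metric.eball (0 : ℝ) 1 := by
    simpa [Metric.mem_eball, edist_eq_enorm_sub, ← ofReal_norm, ENNReal.ofReal_lt_one] using hq
  have := (Real.one_div_one_sub_rpow_hasFPowerSeriesOnBall_zero x).hasSum mem_ball
  simpa [← Ring.multichoose_eq, mul_comm] using this.summable

lemma summable_natCast_mul_multichoose_mul_pow (x : ℝ) {q : ℝ} (hq : |q| < 1) :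
    Summable fun k : ℕ ↦ (k : ℝ) * multichoose x k * q ^ k := by
  rw [← summable_nat_add_iff 1]
  refine ((summable_multichoose_mul_pow (x + 1) hq).mul_left (x * q)).congr fun k ↦ ?_
  rw [Nat.cast_succ, succ_mul_multichoose_succ]
  ring

lemma summable_linear_mul_multichoose_mul_pow (a b x : ℝ) {q : ℝ} (hq : |q| < 1) :
    Summable fun k : ℕ ↦ (a * k + b) * multichoose x k * q ^ k :=
  (((summable_natCast_mul_multichoose_mul_pow x hq).mul_left a).add
    ((summable_multichoose_mul_pow x hq).mul_left b)).congr fun k ↦ by ring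

end Multichoose

section PrabhakarBounds

lemma prabhakar_eq_tsum_multichoose (α β γ u : ℝ) :
    prabhakar α β γ u = ∑' k : ℕ, multichoose γ k * u ^ k / Real.Gamma (α * k + β) := by
  refine tsum_congr fun k ↦ ?_
  rw [multichoose_eq_eval_ascPochhammer_div_factorial, div_mul_eq_mul_div, div_div,
    mul_comm (u ^ k)]

lemma multichoose_mul_rpow_pow_div_Gamma {α β z : ℝ} (γ : ℝ) {k : ℕ} (hs : α * k + β ≠ 0)
    (hz : 0 < z) :
    multichoose γ k * (z ^ α) ^ k / Real.Gamma (α * k + β) =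
      z ^ (-β) * ((α * k + β) * multichoose γ k) *
        (z ^ (α * k + β) / Real.Gamma (α * k + β + 1)) := by
  have pow_eq : (z ^ α) ^ k = z ^ (-β) * z ^ (α * k + β) := by
    rw [← Real.rpow_add hz, ← Real.rpow_mul_natCast hz.le]
    ring_nf
  rw [pow_eq, Real.Gamma_add_one hs, ← div_div]
  field_simp

variable {α β γ r u z : ℝ}

lemma multichoose_mul_pow_div_Gamma_pos (hα : 0 < α) (hβ : 0 < β) (hγ : 0 < γ) (hu : 0 < u)
    (k : ℕ) : 0 < multichoose γ k * u ^ k / Real.Gamma (α * k + β) :=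
  div_pos (mul_pos (multichoose_pos hγ k) (pow_pos hu k)) (Real.Gamma_pos_of_pos (by positivity))

lemma multichoose_mul_rpow_pow_div_Gamma_le (hα : 0 < α) (hβ : 0 < β) (hγ : 0 < γ) (hr : 0 < r)
    (hz : 0 < z) (k : ℕ) :
    multichoose γ k * (z ^ α) ^ k / Real.Gamma (α * k + β) ≤
      (α * k + β) * multichoose γ k * r ^ (-(α * k + β)) * (z ^ (-β) * Real.exp (r * z)) := by
  have hs : 0 < α * k + β := by positivity
  have weight_pos := multichoose_pos hγ k
  calc multichoose γ k * (z ^ α) ^ k / Real.Gamma (α * k + β)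
      = z ^ (-β) * ((α * k + β) * multichoose γ k) *
          (z ^ (α * k + β) / Real.Gamma (α * k + β + 1)) :=
        multichoose_mul_rpow_pow_div_Gamma γ hs.ne' hz
    _ ≤ z ^ (-β) * ((α * k + β) * multichoose γ k) *
          (r ^ (-(α * k + β)) * Real.exp (r * z)) := by
        gcongr
        exact rpow_div_Gamma_add_one_le hr hs.le hz.le
    _ = _ := by ring

lemma summable_linear_mul_multichoose_mul_rpow (β γ : ℝ) (hα : 0 < α) (hr : 1 < r) :
    Summable fun k : ℕ ↦ (α * k + β) * multichoose γ k * r ^ (-(α * k + β)) := by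
  have hr0 : 0 < r := one_pos.trans hr
  have hq : |r ^ (-α)| < 1 := by
    rw [abs_of_pos (by positivity)]
    exact Real.rpow_lt_one_of_one_lt_of_neg hr (neg_lt_zero.2 hα)
  refine ((summable_linear_mul_multichoose_mul_pow α β γ hq).mul_right (r ^ (-β))).congr fun k ↦ ?_
  rw [mul_assoc _ (_ ^ k), ← Real.rpow_mul_natCast hr0.le, ← Real.rpow_add hr0]
  ring_nf

lemma summable_prabhakar_rpow (hα : 0 < α) (hβ : 0 < β) (hγ : 0 < γ) (hz : 0 < z) :
    Summable fun k : ℕ ↦ multichoose γ k * (z ^ α) ^ k / Real.Gamma (α * k + β) :=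
  Summable.of_nonneg_of_le
    (fun k ↦ (multichoose_mul_pow_div_Gamma_pos hα hβ hγ (by positivity) k).le)
    (multichoose_mul_rpow_pow_div_Gamma_le hα hβ hγ two_pos hz)
    ((summable_linear_mul_multichoose_mul_rpow β γ hα one_lt_two).mul_right _)

lemma multichoose_mul_rpow_pow_div_Gamma_le_prabhakar (hα : 0 < α) (hβ : 0 < β) (hγ : 0 < γ)
    (hz : 0 < z) (k : ℕ) :
    multichoose γ k * (z ^ α) ^ k / Real.Gamma (α * k + β) ≤ prabhakar α β γ (z ^ α) := by
  rw [prabhakar_eq_tsum_multichoose]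
  exact (summable_prabhakar_rpow hα hβ hγ hz).le_tsum k fun j _ ↦
    (multichoose_mul_pow_div_Gamma_pos hα hβ hγ (by positivity) j).le

lemma prabhakar_rpow_pos (hα : 0 < α) (hβ : 0 < β) (hγ : 0 < γ) (hz : 0 < z) :
    0 < prabhakar α β γ (z ^ α) :=
  (multichoose_mul_pow_div_Gamma_pos hα hβ hγ (by positivity) 0).trans_le
    (multichoose_mul_rpow_pow_div_Gamma_le_prabhakar hα hβ hγ hz 0)

lemma exists_prabhakar_rpow_le (hα : 0 < α) (hβ : 0 < β) (hγ : 0 < γ) (hr : 1 < r) :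
    ∃ C > 0, ∀ z > 0, prabhakar α β γ (z ^ α) ≤ C * z ^ (-β) * Real.exp (r * z) := by
  have hr0 : 0 < r := one_pos.trans hr
  have majorant_summable := summable_linear_mul_multichoose_mul_rpow β γ hα hr
  have majorant_pos (k : ℕ) : 0 < (α * k + β) * multichoose γ k * r ^ (-(α * k + β)) := by
    have := multichoose_pos hγ k
    positivity
  refine ⟨_, majorant_summable.tsum_pos (fun k ↦ (majorant_pos k).le) 0 (majorant_pos 0),
    fun z hz ↦ ?_⟩
  rw [prabhakar_eq_tsum_multichoose, mul_assoc, ← tsum_mul_right]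
  exact (summable_prabhakar_rpow hα hβ hγ hz).tsum_le_tsum
    (multichoose_mul_rpow_pow_div_Gamma_le hα hβ hγ hr0 hz) (majorant_summable.mul_right _)

lemma exists_natCast_mul_add_mem_Ioc {a b y : ℝ} (ha : 0 < a) (hby : b ≤ y) :
    ∃ k : ℕ, a * k + b ∈ Ioc (y - a) y := by
  refine ⟨⌊(y - b) / a⌋₊, ?_, ?_⟩
  · have := (div_lt_iff₀' ha).1 (Nat.lt_floor_add_one ((y - b) / a))
    linarith
  · have := (le_div_iff₀' ha).1 (Nat.floor_le (div_nonneg (sub_nonneg.2 hby) ha.le))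
    linarith

lemma mul_rpow_mul_exp_le_prabhakar_rpow (hα : 0 < α) (hβ : 0 < β) (hγ : 0 < γ)
    (hz : β + 1 ≤ z) :
    min β (α * γ) * Real.exp (-(1 + α)) * z ^ (-β - 1) * Real.exp z ≤
      prabhakar α β γ (z ^ α) := by
  have hz0 : 0 < z := by linarith
  obtain ⟨k, hk_lower, hk_upper⟩ :=
    exists_natCast_mul_add_mem_Ioc (b := β) (y := z - 1) hα (by linarith)
  have hs : 0 < α * k + β := by positivity
  have weight_pos := multichoose_pos hγ k
  have exp_div_le : Real.exp (z - 1 - α) / z ≤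
      z ^ (α * k + β) / Real.Gamma (α * k + β + 1) :=
    calc Real.exp (z - 1 - α) / z ≤ Real.exp (α * k + β) / z := by gcongr
      _ ≤ z ^ (α * k + β) / Real.Gamma (α * k + β + 1) :=
        exp_div_le_rpow_div_Gamma_add_one hs.le (by linarith)
  calc min β (α * γ) * Real.exp (-(1 + α)) * z ^ (-β - 1) * Real.exp z
      = z ^ (-β) * min β (α * γ) * (Real.exp (z - 1 - α) / z) := by
        rw [Real.rpow_sub_one hz0.ne', show z - 1 - α = -(1 + α) + z by ring, Real.exp_add]
        ring
    _ ≤ z ^ (-β) * ((α * k + β) * multichoose γ k) *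
          (z ^ (α * k + β) / Real.Gamma (α * k + β + 1)) := by
        refine mul_le_mul (mul_le_mul_of_nonneg_left ?_ (by positivity)) exp_div_le
          (by positivity) (by positivity)
        exact min_le_linear_mul_multichoose hα.le hβ.le hγ k
    _ = multichoose γ k * (z ^ α) ^ k / Real.Gamma (α * k + β) :=
        (multichoose_mul_rpow_pow_div_Gamma γ hs.ne' hz0).symm
    _ ≤ prabhakar α β γ (z ^ α) :=
        multichoose_mul_rpow_pow_div_Gamma_le_prabhakar hα hβ hγ hz0 k

end PrabhakarBounds

section Limit

lemma tendsto_log_mul_rpow_mul_exp_div_atTop {C : ℝ} (hC : 0 < C) (p c : ℝ) :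
    Tendsto (fun z ↦ Real.log (C * z ^ p * Real.exp (c * z)) / z) atTop (𝓝 c) := by
  have const_div : Tendsto (fun z ↦ Real.log C / z) atTop (𝓝 0) :=
    tendsto_const_nhds.div_atTop tendsto_id
  have log_div : Tendsto (fun z ↦ Real.log z / z) atTop (𝓝 0) :=
    Real.isLittleO_log_id_atTop.tendsto_div_nhds_zero
  have sum_tendsto := (const_div.add (log_div.const_mul p)).add_const c
  rw [mul_zero, add_zero, zero_add] at sum_tendsto
  refine sum_tendsto.congr' ?_
  filter_upwards [eventually_gt_atTop 0] with z hz
  rw [Real.log_mul (by positivity) (by positivity), Real.log_mul hC.ne' (by positivity),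
    Real.log_exp, Real.log_rpow hz]
  field_simp

variable {α β γ : ℝ}

lemma tendsto_log_prabhakar_rpow_div_atTop (hα : 0 < α) (hβ : 0 < β) (hγ : 0 < γ) :
    Tendsto (fun z ↦ Real.log (prabhakar α β γ (z ^ α)) / z) atTop (𝓝 1) := by
  refine tendsto_order.2 ⟨fun a ha ↦ ?lower, fun a ha ↦ ?upper⟩
  case lower =>
    have hC : 0 < min β (α * γ) * Real.exp (-(1 + α)) := by positivity
    have minorant_tendsto := tendsto_log_mul_rpow_mul_exp_div_atTop hC (-β - 1) 1
    simp only [one_mul] at minorant_tendsto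
    filter_upwards [minorant_tendsto.eventually_const_lt ha,
      eventually_gt_atTop 0, eventually_ge_atTop (β + 1)] with z ha_lt hz hβz
    refine ha_lt.trans_le ?_
    gcongr
    exact mul_rpow_mul_exp_le_prabhakar_rpow hα hβ hγ hβz
  case upper =>
    obtain ⟨r, hr, hra⟩ := exists_between ha
    obtain ⟨C, hC, prabhakar_le⟩ := exists_prabhakar_rpow_le hα hβ hγ hr
    filter_upwards [(tendsto_log_mul_rpow_mul_exp_div_atTop hC (-β) r).eventually_lt_const hra,
      eventually_gt_atTop 0] with z lt_ha hz
    refine lt_of_le_of_lt ?_ lt_ha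
    have := prabhakar_rpow_pos hα hβ hγ hz
    gcongr
    exact prabhakar_le z hz

theorem log_prabhakar_limit_general {c : ℝ} (hα : 0 < α) (hβ : 0 < β) (hγ : 0 < γ) (hc : 0 < c) :
    Tendsto (fun t : ℝ ↦ t ^ (-(1 / α)) * Real.log (prabhakar α β γ (c * t)))
      atTop (𝓝 (c ^ (1 / α))) := by
  have scale_tendsto : Tendsto (fun t : ℝ ↦ (c * t) ^ (1 / α)) atTop atTop :=
    (tendsto_rpow_atTop (one_div_pos.2 hα)).comp (tendsto_id.const_mul_atTop hc)
  have rescaled_tendsto :=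
    ((tendsto_log_prabhakar_rpow_div_atTop hα hβ hγ).comp scale_tendsto).const_mul (c ^ (1 / α))
  rw [mul_one] at rescaled_tendsto
  refine rescaled_tendsto.congr' ?_
  filter_upwards [eventually_gt_atTop 0] with t ht
  have scale_rpow : ((c * t) ^ (1 / α)) ^ α = c * t := by
    rw [one_div, Real.rpow_inv_rpow (by positivity) hα.ne']
  rw [Function.comp_apply, scale_rpow, Real.mul_rpow hc.le ht.le, Real.rpow_neg ht.le]
  field_simp

end Limit

/-- Under (2.2) of the paper: for `α ∈ (0,1]`, `β, γ, λ, u > 0`,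
`t^{-1/α} log E^γ_{α,β}(λ u t) → (λu)^{1/α}` as `t → ∞`. -/
theorem log_prabhakar_limit
    (α β γ lam u : ℝ)
    (hα : α ∈ Set.Ioc (0 : ℝ) 1) (hβ : 0 < β) (hγ : 0 < γ)
    (hlam : 0 < lam) (hu : 0 < u) :
    Tendsto (fun t : ℝ => t ^ (-(1 / α)) * Real.log (prabhakar α β γ (lam * u * t)))
      atTop (𝓝 ((lam * u) ^ (1 / α))) :=
  log_prabhakar_limit_general hα.1 hβ hγ (mul_pos hlam hu)
end

section
/- Let α ∈ (0,1], β > 0 and let γ be a positive integer. Then, as u → ∞, E^{γ+1}_{α,β}(u) = e^{u^{1/α}} u^{(γ+1−β)/α} / (α^{γ+1} γ!) · (1 + O(u^{−1/α})); equivalently, the function u ↦ α^{γ+1} γ! e^{−u^{1/α}} u^{−(γ+1−β)/α} E^{γ+1}_{α,β}(u) − 1 is O(u^{−1/α}) as u → ∞. -/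
open Filter Topology

open Asymptotics

/-!
The kernel `x ^ (b - 1) * E_{α,b}(x ^ α)` has Laplace transform `z ^ (-b) / (1 - z ^ (-α))`, whose
only singularity in some half-plane `c ≤ Re z` with `0 < c < 1` is a simple pole at `1` of residue
`α⁻¹`. Subtracting `α⁻¹` times the kernel for `α = 1`, `b = 2`, which is `exp x - 1`, cancels the
pole; for `b ≥ 2` the difference decays like `|z| ^ (-2)`, so the Bromwich contour can be moved to
`Re z = c` and the kernel is `α⁻¹ * exp x + O(exp (c * x))`. Smaller `b` only add finitely many
powers of `x`.

Since `(γ + 1)_k / k!` is a polynomial of degree `γ` in `k`, the substitution `u = x ^ α` turns the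
Prabhakar function into a kernel with polynomial weights. As `y / Γ(y + 1) = 1 / Γ(y)`, each linear
factor of the weight lowers `b` by one and multiplies the leading term by `α⁻¹ * x`, with a relative
error `O(x⁻¹)`.
-/

open MeasureTheory Set

section Laplace

variable {E : Type*} [NormedAddCommGroup E] [NormedSpace ℂ E] {f : ℝ → E} {s : ℂ} {σ : ℝ}

/-- The (one-sided) Laplace transform `s ↦ ∫₀^∞ e^{-st} f(t) dt`. -/
noncomputable def laplaceTransform (f : ℝ → E) (s : ℂ) : E :=
  ∫ t in Ioi (0 : ℝ), Complex.exp (-(s * t)) • f t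

/-- Absolute convergence of the integral defining `laplaceTransform f s`. -/
def LaplaceConvergent (f : ℝ → E) (s : ℂ) : Prop :=
  IntegrableOn (fun t : ℝ => Complex.exp (-(s * t)) • f t) (Ioi 0)

lemma norm_cexp_neg_mul_ofReal (s : ℂ) (t : ℝ) :
    ‖Complex.exp (-(s * t))‖ = Real.exp (-(s.re * t)) := by
  simp [Complex.norm_exp]

lemma laplaceConvergent_of_norm_le_exp {C l : ℝ}
    (hf : AEStronglyMeasurable f (volume.restrict (Ioi 0)))
    (hbound : ∀ t, 0 < t → ‖f t‖ ≤ C * Real.exp (l * t)) (hs : l < s.re) :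
    LaplaceConvergent f s := by
  have hexp : IntegrableOn (fun t : ℝ => C * Real.exp ((l - s.re) * t)) (Ioi 0) :=
    (integrableOn_exp_mul_Ioi (sub_neg.2 hs) 0).const_mul C
  refine hexp.mono' (AEStronglyMeasurable.smul (by fun_prop) hf) ?_
  filter_upwards [ae_restrict_mem measurableSet_Ioi] with t ht
  calc ‖Complex.exp (-(s * t)) • f t‖
      ≤ Real.exp (-(s.re * t)) * (C * Real.exp (l * t)) := by
        rw [norm_smul, norm_cexp_neg_mul_ofReal]
        gcongr
        exact hbound t ht
    _ = C * Real.exp ((l - s.re) * t) := by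
        rw [mul_left_comm, ← Real.exp_add]
        ring_nf

lemma LaplaceConvergent.aestronglyMeasurable (h : LaplaceConvergent f s) :
    AEStronglyMeasurable f (volume.restrict (Ioi 0)) := by
  have hexp : AEStronglyMeasurable (fun t : ℝ => Complex.exp (s * t)) (volume.restrict (Ioi 0)) :=
    by fun_prop
  refine (hexp.smul (IntegrableOn.integrable h).aestronglyMeasurable).congr (.of_forall fun t => ?_)
  simp [smul_smul, ← Complex.exp_add]

lemma LaplaceConvergent.const_smul (h : LaplaceConvergent f s) (a : ℂ) :
    LaplaceConvergent (fun t => a • f t) s := by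
  simp only [LaplaceConvergent, smul_comm _ a]
  exact Integrable.smul a h

lemma LaplaceConvergent.sub {g : ℝ → E} (hf : LaplaceConvergent f s) (hg : LaplaceConvergent g s) :
    LaplaceConvergent (fun t => f t - g t) s := by
  simp only [LaplaceConvergent, smul_sub]
  exact Integrable.sub hf hg

lemma laplaceTransform_const_smul (a : ℂ) :
    laplaceTransform (fun t => a • f t) s = a • laplaceTransform f s := by
  simp only [laplaceTransform, smul_comm _ a, integral_smul]

lemma laplaceTransform_sub {g : ℝ → E} (hf : LaplaceConvergent f s) (hg : LaplaceConvergent g s) :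
    laplaceTransform (fun t => f t - g t) s = laplaceTransform f s - laplaceTransform g s := by
  simp only [laplaceTransform, smul_sub]
  exact integral_sub hf hg

theorem differentiableOn_laplaceTransform
    (hf : ∀ s : ℂ, σ < s.re → LaplaceConvergent f s) :
    DifferentiableOn ℂ (laplaceTransform f) {s : ℂ | σ < s.re} := by
  intro s hs
  obtain ⟨ε, hε, hεs⟩ : ∃ ε > 0, σ + 2 * ε < s.re :=
    ⟨(s.re - σ) / 3, by simpa using hs, by linarith [show σ < s.re from hs]⟩
  have hint {z : ℂ} (hz : σ < z.re) :
      Integrable (fun t : ℝ => Complex.exp (-(z * t)) • f t) (volume.restrict (Ioi 0)) := hf z hz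
  have hdom := (hint (z := s - 2 * ε) (by simpa using lt_sub_iff_add_lt.2 hεs)).norm.const_mul ε⁻¹
  refine (hasDerivAt_integral_of_dominated_loc_of_deriv_le
    (F' := fun z (t : ℝ) => (-t * Complex.exp (-(z * t))) • f t)
    (Metric.ball_mem_nhds s hε) ?_ (hint hs) ?_ ?_ hdom ?_).2.differentiableAt
    |>.differentiableWithinAt
  · filter_upwards [(Complex.isOpen_re_gt σ).mem_nhds hs] with z hz
    exact (hint hz).aestronglyMeasurable
  · exact AEStronglyMeasurable.smul (by fun_prop) (hf s hs).aestronglyMeasurable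
  · filter_upwards [ae_restrict_mem measurableSet_Ioi] with t (ht : 0 < t) z hz
    have hre : s.re - ε ≤ z.re := by
      have := (Complex.abs_re_le_norm (z - s)).trans (mem_ball_iff_norm.1 hz).le
      rw [Complex.sub_re] at this
      linarith [neg_le_of_abs_le this]
    have htε : t ≤ ε⁻¹ * Real.exp (ε * t) := by
      rw [inv_mul_eq_div, le_div_iff₀ hε]
      linarith [Real.add_one_le_exp (ε * t)]
    rw [norm_smul, norm_smul, norm_mul, norm_cexp_neg_mul_ofReal, norm_cexp_neg_mul_ofReal,
      norm_neg, Complex.norm_real, Real.norm_of_nonneg ht.le, ← mul_assoc]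
    refine mul_le_mul_of_nonneg_right ?_ (norm_nonneg _)
    calc t * Real.exp (-(z.re * t))
        ≤ ε⁻¹ * Real.exp (ε * t) * Real.exp (-((s.re - ε) * t)) := by gcongr
      _ = ε⁻¹ * Real.exp (-((s - 2 * ε).re * t)) := by
        rw [mul_assoc, ← Real.exp_add]
        congr 2
        simp only [Complex.sub_re, Complex.mul_re, Complex.re_ofNat, Complex.ofReal_re,
          Complex.im_ofNat, Complex.ofReal_im, mul_zero, sub_zero]
        ring
  · refine .of_forall fun t z _ => HasDerivAt.smul_const ?_ _
    simpa [mul_comm] using ((hasDerivAt_id z).mul_const (t : ℂ)).neg.cexp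

theorem eqOn_laplaceTransform_of_ofReal [CompleteSpace E] {G : ℂ → E}
    (hf : ∀ s : ℂ, σ < s.re → LaplaceConvergent f s)
    (hG : DifferentiableOn ℂ G {s : ℂ | σ < s.re})
    (hfG : ∀ r : ℝ, σ < r → laplaceTransform f r = G r) :
    EqOn (laplaceTransform f) G {s : ℂ | σ < s.re} := by
  have hreal : Tendsto ((↑) : ℝ → ℂ) (𝓝[≠] (σ + 1)) (𝓝[≠] ((σ + 1 : ℝ) : ℂ)) :=
    Complex.continuous_ofReal.continuousAt.tendsto.inf <|
      tendsto_principal_principal.2 fun r hr => Complex.ofReal_injective.ne hr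
  have hL : AnalyticOnNhd ℂ (laplaceTransform f) {s : ℂ | σ < s.re} :=
    (differentiableOn_laplaceTransform hf).analyticOnNhd (Complex.isOpen_re_gt σ)
  have hG' : AnalyticOnNhd ℂ G {s : ℂ | σ < s.re} := hG.analyticOnNhd (Complex.isOpen_re_gt σ)
  refine hL.eqOn_of_preconnected_of_frequently_eq hG' (convex_halfSpace_re_gt σ).isPreconnected
    (z₀ := ((σ + 1 : ℝ) : ℂ)) (by simp) (hreal.frequently (Eventually.frequently ?_))
  filter_upwards [nhdsWithin_le_nhds (lt_mem_nhds (lt_add_one σ))] with r hr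
  exact hfG r hr

open FourierTransform in
lemma fourier_indicator_exp_smul (f : ℝ → E) (σ w : ℝ) :
    𝓕 (indicator (Ioi 0) fun t : ℝ => Complex.exp (-(σ * t)) • f t) w =
      laplaceTransform f (σ + (2 * Real.pi * w : ℝ) * Complex.I) := by
  rw [Real.fourier_real_eq_integral_exp_smul, laplaceTransform,
    ← integral_indicator measurableSet_Ioi]
  congr 1 with t
  by_cases ht : t ∈ Ioi (0 : ℝ)
  · simp only [indicator_of_mem ht, smul_smul, ← Complex.exp_add]
    congr 2
    push_cast
    ring
  · simp [indicator_of_notMem ht]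

open FourierTransform in
theorem eq_integral_exp_smul_laplaceTransform [CompleteSpace E] {x : ℝ} (hx : 0 < x)
    (hf : LaplaceConvergent f σ)
    (hint : Integrable fun t : ℝ => laplaceTransform f (σ + t * Complex.I))
    (hcont : ContinuousAt f x) :
    f x = (2 * Real.pi)⁻¹ • ∫ t : ℝ, Complex.exp ((σ + t * Complex.I) * x) •
      laplaceTransform f (σ + t * Complex.I) := by
  set g : ℝ → E := indicator (Ioi 0) fun t : ℝ => Complex.exp (-(σ * t)) • f t
  have hg : Integrable g := (integrable_indicator_iff measurableSet_Ioi).2 hf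
  have hFg : Integrable (𝓕 g) := by
    rw [show 𝓕 g = _ from funext (fourier_indicator_exp_smul f σ)]
    exact hint.comp_mul_left' (mul_ne_zero two_ne_zero Real.pi_ne_zero)
  have hgx : g =ᶠ[𝓝 x] fun t : ℝ => Complex.exp (-(σ * t)) • f t := by
    filter_upwards [Ioi_mem_nhds hx] with t ht using indicator_of_mem ht _
  have hgc : ContinuousAt g x :=
    ContinuousAt.congr (ContinuousAt.smul (by fun_prop) hcont) hgx.symm
  have hinv : 𝓕⁻ (𝓕 g) x = g x := hg.fourierInv_fourier_eq hFg hgc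
  calc f x = Complex.exp (σ * x) • g x := by simp [hgx.eq_of_nhds, smul_smul, ← Complex.exp_add]
    _ = ∫ w : ℝ, Complex.exp ((σ + (2 * Real.pi * w : ℝ) * Complex.I) * x) •
          laplaceTransform f (σ + (2 * Real.pi * w : ℝ) * Complex.I) := by
        rw [← hinv, Real.fourierInv_eq', ← integral_smul]
        congr 1 with w
        rw [fourier_indicator_exp_smul, smul_smul, ← Complex.exp_add]
        congr 2
        simp only [RCLike.inner_apply, Real.ringHom_apply, Complex.ofReal_mul,
          Complex.ofReal_ofNat]
        ring
    _ = _ := by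
        rw [Measure.integral_comp_mul_left (fun t : ℝ => Complex.exp ((σ + t * Complex.I) * x) •
          laplaceTransform f (σ + t * Complex.I)), abs_of_pos (by positivity)]

end Laplace

section VerticalLine

variable {E : Type*} [NormedAddCommGroup E] [NormedSpace ℂ E]

theorem integral_vertical_line_eq {f : ℂ → E} {a b : ℝ} {g : ℝ → ℝ}
    (hf : DifferentiableOn ℂ f (Complex.re ⁻¹' uIcc a b))
    (hfg : ∀ z : ℂ, z.re ∈ uIcc a b → ‖f z‖ ≤ g z.im)
    (hg : Integrable g) (hg_top : Tendsto g atTop (𝓝 0)) (hg_bot : Tendsto g atBot (𝓝 0)) :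
    ∫ t : ℝ, f (a + t * Complex.I) = ∫ t : ℝ, f (b + t * Complex.I) := by
  have hvert (c : ℝ) (hc : c ∈ uIcc a b) :
      Tendsto (fun T : ℝ => ∫ t in (-T)..T, f (c + t * Complex.I)) atTop
        (𝓝 (∫ t : ℝ, f (c + t * Complex.I))) := by
    have hcont : Continuous fun t : ℝ => f (c + t * Complex.I) :=
      hf.continuousOn.comp_continuous (by fun_prop) (by simpa using hc)
    refine intervalIntegral_tendsto_integral (hg.mono' hcont.aestronglyMeasurable
      (.of_forall fun t => ?_)) tendsto_neg_atTop_atBot tendsto_id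
    simpa using hfg (c + t * Complex.I) (by simpa using hc)
  have hhor {l : Filter ℝ} (hl : Tendsto g l (𝓝 0)) :
      Tendsto (fun T : ℝ => ∫ y in a..b, f (y + T * Complex.I)) l (𝓝 0) := by
    refine squeeze_zero_norm (fun T => intervalIntegral.norm_integral_le_of_norm_le_const
      (C := g T) fun y hy => ?_) (by simpa using hl.mul_const |b - a|)
    simpa using hfg (y + T * Complex.I) (by simpa using uIoc_subset_uIcc hy)
  have hrect (T : ℝ) : (∫ y in a..b, f (y + (-T : ℝ) * Complex.I)) -
      (∫ y in a..b, f (y + T * Complex.I)) + Complex.I • (∫ t in (-T)..T, f (b + t * Complex.I)) -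
      Complex.I • (∫ t in (-T)..T, f (a + t * Complex.I)) = 0 := by
    simpa using Complex.integral_boundary_rect_eq_zero_of_differentiableOn f ⟨a, -T⟩ ⟨b, T⟩
      (hf.mono fun z hz => hz.1)
  have hlim := ((((hhor hg_bot).comp tendsto_neg_atTop_atBot).sub (hhor hg_top)).add
    ((hvert b right_mem_uIcc).const_smul Complex.I)).sub
    ((hvert a left_mem_uIcc).const_smul Complex.I)
  have hzero := tendsto_nhds_unique hlim (tendsto_const_nhds.congr fun T => (hrect T).symm)
  rw [sub_self, zero_add, ← smul_sub, smul_eq_zero_iff_right Complex.I_ne_zero,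
    sub_eq_zero] at hzero
  exact hzero.symm

variable {f : ℝ → E} {Φ : ℂ → E} {c σ C x : ℝ}

lemma norm_integral_exp_smul_vertical_le (hcσ : c ≤ σ) (hx : 0 ≤ x)
    (hΦ : DifferentiableOn ℂ Φ {z : ℂ | c ≤ z.re})
    (hC : ∀ z : ℂ, c ≤ z.re → ‖Φ z‖ ≤ C * (1 + z.im ^ 2)⁻¹) :
    ‖∫ t : ℝ, Complex.exp ((σ + t * Complex.I) * x) • Φ (σ + t * Complex.I)‖ ≤
      C * Real.pi * Real.exp (c * x) := by
  have hbound (l : ℝ) (z : ℂ) (hcz : c ≤ z.re) (hzl : z.re ≤ l) :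
      ‖Complex.exp (z * x) • Φ z‖ ≤ Real.exp (l * x) * C * (1 + z.im ^ 2)⁻¹ := by
    rw [norm_smul, Complex.norm_exp, Complex.re_mul_ofReal, mul_assoc]
    gcongr
    exact hC z hcz
  have hint : Integrable fun t : ℝ => Real.exp (σ * x) * C * (1 + t ^ 2)⁻¹ :=
    integrable_inv_one_add_sq.const_mul _
  have hdecay {l : Filter ℝ} (hl : Tendsto (fun t : ℝ => t ^ 2) l atTop) :
      Tendsto (fun t : ℝ => Real.exp (σ * x) * C * (1 + t ^ 2)⁻¹) l (𝓝 0) := by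
    simpa using (tendsto_atTop_add_const_left _ 1 hl).inv_tendsto_atTop.const_mul
      (Real.exp (σ * x) * C)
  have hsq_bot : Tendsto (fun t : ℝ => t ^ 2) atBot atTop := by
    refine ((tendsto_pow_atTop two_ne_zero).comp tendsto_neg_atBot_atTop).congr fun t => ?_
    simp
  have hdiff : DifferentiableOn ℂ (fun z => Complex.exp (z * x) • Φ z) {z : ℂ | c ≤ z.re} :=
    DifferentiableOn.smul (by fun_prop) hΦ
  have hshift := integral_vertical_line_eq (a := c) (b := σ)
    (hdiff.mono fun z hz => (uIcc_of_le hcσ ▸ hz : z.re ∈ Icc c σ).1)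
    (fun z hz => by
      rw [uIcc_of_le hcσ] at hz
      exact hbound σ z hz.1 hz.2)
    hint (hdecay (tendsto_pow_atTop two_ne_zero)) (hdecay hsq_bot)
  rw [← hshift]
  calc _ ≤ ∫ t : ℝ, Real.exp (c * x) * C * (1 + t ^ 2)⁻¹ :=
        norm_integral_le_of_norm_le (integrable_inv_one_add_sq.const_mul _) <|
          .of_forall fun t => by simpa using hbound c (c + t * Complex.I) (by simp) (by simp)
    _ = C * Real.pi * Real.exp (c * x) := by
        rw [integral_const_mul, integral_univ_inv_one_add_sq]
        ring

theorem norm_le_exp_of_laplaceTransform_eq [CompleteSpace E] (hcσ : c ≤ σ) (hx : 0 < x)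
    (hΦ : DifferentiableOn ℂ Φ {z : ℂ | c ≤ z.re})
    (hC : ∀ z : ℂ, c ≤ z.re → ‖Φ z‖ ≤ C * (1 + z.im ^ 2)⁻¹)
    (hf : LaplaceConvergent f σ) (hfΦ : ∀ s : ℂ, s.re = σ → laplaceTransform f s = Φ s)
    (hcont : ContinuousAt f x) :
    ‖f x‖ ≤ C / 2 * Real.exp (c * x) := by
  have hline (t : ℝ) : laplaceTransform f (σ + t * Complex.I) = Φ (σ + t * Complex.I) :=
    hfΦ _ (by simp)
  have hΦc : Continuous fun t : ℝ => Φ (σ + t * Complex.I) :=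
    hΦ.continuousOn.comp_continuous (by fun_prop) (by simpa using hcσ)
  have hint : Integrable fun t : ℝ => Φ (σ + t * Complex.I) :=
    (integrable_inv_one_add_sq.const_mul C).mono' hΦc.aestronglyMeasurable <|
      .of_forall fun t => by simpa using hC (σ + t * Complex.I) (by simpa using hcσ)
  rw [eq_integral_exp_smul_laplaceTransform hx hf (by simpa only [hline] using hint) hcont]
  simp only [hline]
  rw [norm_smul, Real.norm_of_nonneg (by positivity)]
  calc _ ≤ (2 * Real.pi)⁻¹ * (C * Real.pi * Real.exp (c * x)) := by
        gcongr
        exact norm_integral_exp_smul_vertical_le hcσ hx.le hΦ hC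
    _ = C / 2 * Real.exp (c * x) := by field_simp

end VerticalLine

section Symbol

variable {α b c : ℝ} {z : ℂ}

/-- The symbol `z ^ (-b) / (1 - z ^ (-α))`, which is the Laplace transform of the kernel
`mittagLefflerKernel α b`. -/
noncomputable def mittagLefflerSymbol (α b : ℝ) (z : ℂ) : ℂ :=
  z ^ (-b : ℂ) / (1 - z ^ (-α : ℂ))

/-- The product `(z - 1) * mittagLefflerSymbol α b z`, continued analytically to `z = 1`. -/
noncomputable def regularizedSymbol (α b : ℝ) (z : ℂ) : ℂ :=
  z ^ (α - b : ℂ) / dslope (fun w => w ^ (α : ℂ)) 1 z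

/-- What is left of `mittagLefflerSymbol α b` once its pole at `1` is removed, by subtracting the
multiple of the symbol `1 / (z * (z - 1))` of parameters `1`, `2` that has the same residue. -/
noncomputable def symbolRemainder (α b : ℝ) : ℂ → ℂ :=
  dslope (fun z => regularizedSymbol α b z - α⁻¹ * regularizedSymbol 1 2 z) 1

lemma hasDerivAt_cpow_one (a : ℂ) : HasDerivAt (fun z : ℂ => z ^ a) a 1 := by
  simpa using (hasDerivAt_id (1 : ℂ)).cpow_const (c := a) Complex.one_mem_slitPlane

lemma mittagLefflerSymbol_eq_regularizedSymbol_div (h0 : z ≠ 0) (h1 : z ≠ 1) :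
    mittagLefflerSymbol α b z = regularizedSymbol α b z / (z - 1) := by
  have hpow : z ^ (α : ℂ) ≠ 0 := by simp [Complex.cpow_eq_zero_iff, h0]
  rw [mittagLefflerSymbol, regularizedSymbol, dslope_of_ne _ h1, slope_def_field,
    Complex.cpow_sub _ _ h0, Complex.cpow_neg, Complex.cpow_neg, Complex.one_cpow]
  have hden : 1 - (z ^ (α : ℂ))⁻¹ = (z ^ (α : ℂ) - 1) / z ^ (α : ℂ) := by field_simp
  rw [hden, div_div_eq_mul_div, div_div_eq_mul_div, div_right_comm,
    mul_div_cancel_right₀ _ (sub_ne_zero.2 h1), inv_mul_eq_div]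

lemma regularizedSymbol_one (α b : ℝ) : regularizedSymbol α b 1 = (α : ℂ)⁻¹ := by
  simp [regularizedSymbol, (hasDerivAt_cpow_one α).deriv]

lemma symbolRemainder_eq_sub (h0 : z ≠ 0) (h1 : z ≠ 1) :
    symbolRemainder α b z = mittagLefflerSymbol α b z - α⁻¹ * mittagLefflerSymbol 1 2 z := by
  rw [symbolRemainder, dslope_of_ne _ h1, slope_def_field]
  simp only [regularizedSymbol_one, mittagLefflerSymbol_eq_regularizedSymbol_div h0 h1]
  simp only [Complex.ofReal_inv, Complex.ofReal_one, inv_one, mul_one, sub_self, sub_zero]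
  ring

lemma exists_forall_cpow_eq_one_imp_eq_one (hα : α ≠ 0) :
    ∃ c ∈ Ioo (0 : ℝ) 1, ∀ z : ℂ, c < z.re → z ^ (α : ℂ) = 1 → z = 1 := by
  obtain ⟨ε, hε, hroot⟩ : ∃ ε > 0, ∀ z : ℂ, dist z 1 < ε → z ≠ 1 → z ^ (α : ℂ) ≠ 1 :=
    Metric.eventually_nhds_iff.1 <| eventually_nhdsWithin_iff.1 <|
      (hasDerivAt_cpow_one α).eventually_ne (by exact_mod_cast hα)
  refine ⟨max (1 / 2) (1 - ε ^ 2 / 2), ⟨by positivity, max_lt (by norm_num) (by nlinarith)⟩,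
    fun z hz hzα => by_contra fun hz1 => hroot z ?_ hz1 hzα⟩
  have hnorm : ‖z‖ = 1 := by
    rw [← Real.rpow_left_inj (norm_nonneg z) zero_le_one hα, Real.one_rpow,
      ← Complex.norm_cpow_real, hzα, norm_one]
  have hdist : dist z 1 ^ 2 = 2 - 2 * z.re := by
    have h1 := Complex.sq_norm_sub_sq_re z
    have h2 := Complex.sq_norm_sub_sq_re (z - 1)
    rw [hnorm] at h1
    rw [dist_eq_norm]
    simp only [Complex.sub_re, Complex.one_re, Complex.sub_im, Complex.one_im, sub_zero] at h2
    linarith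
  refine lt_of_pow_lt_pow_left₀ 2 hε.le ?_
  linarith [(le_max_right _ _).trans_lt hz]

section Analytic

variable (hα : α ≠ 0) (hc : c ∈ Ioo (0 : ℝ) 1)
  (hroot : ∀ z : ℂ, c < z.re → z ^ (α : ℂ) = 1 → z = 1)

include hα hc hroot

lemma differentiableOn_regularizedSymbol (b : ℝ) :
    DifferentiableOn ℂ (regularizedSymbol α b) {z : ℂ | c < z.re} := by
  have hslit : {z : ℂ | c < z.re} ⊆ Complex.slitPlane := fun z hz => .inl (hc.1.trans hz)
  have hcpow (a : ℂ) : DifferentiableOn ℂ (fun z : ℂ => z ^ a) {z : ℂ | c < z.re} := fun z hz =>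
    (differentiableAt_id.cpow_const (hslit hz)).differentiableWithinAt
  have hnhds : {z : ℂ | c < z.re} ∈ 𝓝 (1 : ℂ) :=
    (Complex.isOpen_re_gt c).mem_nhds (by simpa using hc.2)
  refine (hcpow _).div ((Complex.differentiableOn_dslope hnhds).2 (hcpow α)) fun z hz => ?_
  rcases eq_or_ne z 1 with rfl | hz1
  · rw [dslope_same, (hasDerivAt_cpow_one α).deriv]
    exact_mod_cast hα
  · rw [dslope_of_ne _ hz1, slope_def_field, Complex.one_cpow]
    exact div_ne_zero (sub_ne_zero.2 fun h => hz1 (hroot z hz h)) (sub_ne_zero.2 hz1)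

lemma differentiableOn_symbolRemainder (b : ℝ) :
    DifferentiableOn ℂ (symbolRemainder α b) {z : ℂ | c < z.re} := by
  have hnhds : {z : ℂ | c < z.re} ∈ 𝓝 (1 : ℂ) :=
    (Complex.isOpen_re_gt c).mem_nhds (by simpa using hc.2)
  refine (Complex.differentiableOn_dslope hnhds).2 <|
    (differentiableOn_regularizedSymbol hα hc hroot b).sub <| .const_mul ?_ _
  exact differentiableOn_regularizedSymbol one_ne_zero hc (fun z _ h => by simpa using h) 2

end Analytic

lemma norm_mittagLefflerSymbol_le (hb : 2 ≤ b) (hz : 1 ≤ ‖z‖) (hzα : 2 ≤ ‖z‖ ^ α) :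
    ‖mittagLefflerSymbol α b z‖ ≤ 4 * (1 + z.im ^ 2)⁻¹ := by
  have hden : 1 / 2 ≤ ‖1 - z ^ (-α : ℂ)‖ := by
    have hinv : ‖z ^ (-α : ℂ)‖ ≤ 1 / 2 := by
      rw [Complex.cpow_neg, norm_inv, Complex.norm_cpow_real, one_div]
      gcongr
    have := norm_sub_norm_le 1 (z ^ (-α : ℂ))
    rw [norm_one] at this
    linarith
  have hnum : ‖z ^ (-b : ℂ)‖ ≤ (‖z‖ ^ 2)⁻¹ := by
    rw [Complex.cpow_neg, norm_inv, Complex.norm_cpow_real, ← Real.rpow_two]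
    gcongr
  have him : 1 + z.im ^ 2 ≤ 2 * ‖z‖ ^ 2 := by
    nlinarith [sq_le_sq.2 ((Complex.abs_im_le_norm z).trans_eq (abs_norm z).symm)]
  rw [mittagLefflerSymbol, norm_div]
  calc ‖z ^ (-b : ℂ)‖ / ‖1 - z ^ (-α : ℂ)‖ ≤ (‖z‖ ^ 2)⁻¹ / (1 / 2) := by gcongr
    _ = 4 * (2 * ‖z‖ ^ 2)⁻¹ := by field_simp; norm_num
    _ ≤ 4 * (1 + z.im ^ 2)⁻¹ := by gcongr

lemma exists_norm_symbolRemainder_le_of_le_norm (hα : 0 < α) (hb : 2 ≤ b) :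
    ∃ T : ℝ, ∀ z : ℂ, T ≤ ‖z‖ →
      ‖symbolRemainder α b z‖ ≤ (4 + α⁻¹ * 4) * (1 + z.im ^ 2)⁻¹ := by
  refine ⟨max 2 (2 ^ α⁻¹), fun z hz => ?_⟩
  have hz2 : 2 ≤ ‖z‖ := (le_max_left _ _).trans hz
  have hzα : 2 ≤ ‖z‖ ^ α :=
    (Real.rpow_inv_le_iff_of_pos zero_le_two (norm_nonneg z) hα).1 ((le_max_right _ _).trans hz)
  have h0 : z ≠ 0 := norm_pos_iff.1 (by linarith)
  have h1 : z ≠ 1 := by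
    rintro rfl
    norm_num at hz2
  rw [symbolRemainder_eq_sub h0 h1, add_mul, mul_assoc]
  refine (norm_sub_le _ _).trans <|
    add_le_add (norm_mittagLefflerSymbol_le hb (by linarith) hzα) ?_
  rw [norm_mul, Complex.norm_real, Real.norm_of_nonneg (inv_pos.2 hα).le]
  gcongr
  exact norm_mittagLefflerSymbol_le le_rfl (by linarith) (by simpa using hz2)

theorem exists_norm_symbolRemainder_le (hα : 0 < α) (hb : 2 ≤ b)
    (hcont : ContinuousOn (symbolRemainder α b) {z : ℂ | c ≤ z.re}) :
    ∃ C : ℝ, ∀ z : ℂ, c ≤ z.re → ‖symbolRemainder α b z‖ ≤ C * (1 + z.im ^ 2)⁻¹ := by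
  obtain ⟨T, hT⟩ := exists_norm_symbolRemainder_le_of_le_norm hα hb
  have hK : IsCompact (Metric.closedBall (0 : ℂ) T ∩ {z : ℂ | c ≤ z.re}) :=
    (isCompact_closedBall 0 T).inter_right (isClosed_le continuous_const Complex.continuous_re)
  obtain ⟨M, hM⟩ := hK.exists_bound_of_continuousOn
    (ContinuousOn.smul (f := fun z : ℂ => 1 + z.im ^ 2) (by fun_prop)
      (hcont.mono inter_subset_right))
  refine ⟨max M (4 + α⁻¹ * 4), fun z hz => ?_⟩
  rcases le_total ‖z‖ T with hzT | hzT
  · have hMz := hM z ⟨by simpa using hzT, hz⟩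
    rw [Pi.smul_apply', norm_smul, Real.norm_of_nonneg (by positivity)] at hMz
    rw [← div_eq_mul_inv, le_div_iff₀' (by positivity)]
    exact hMz.trans (le_max_left _ _)
  · refine (hT z hzT).trans ?_
    gcongr
    exact le_max_right _ _

end Symbol

section Kernel

variable {α b l x y : ℝ}

/-- The `k`-th term of `mittagLefflerKernel α b x`. When `α k + b` is a pole of `Γ`, the conventions
`Γ = 0` and `x / 0 = 0` give the term `0`, in accordance with `1 / Γ` being entire. -/
noncomputable def mittagLefflerTerm (α b x : ℝ) (k : ℕ) : ℝ :=
  x ^ (α * k + b - 1) / Real.Gamma (α * k + b)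

/-- The Mittag-Leffler kernel `∑ₖ x ^ (α k + b - 1) / Γ(α k + b) = x ^ (b - 1) * E_{α,b}(x ^ α)`,
where `E_{α,b}` is the two-parameter Mittag-Leffler function. -/
noncomputable def mittagLefflerKernel (α b x : ℝ) : ℝ :=
  ∑' k, mittagLefflerTerm α b x k

lemma mittagLefflerTerm_add (α b x : ℝ) (k m : ℕ) :
    mittagLefflerTerm α b x (k + m) = mittagLefflerTerm α (b + α * m) x k := by
  simp only [mittagLefflerTerm, Nat.cast_add]
  ring_nf

lemma mittagLefflerTerm_nonneg (hα : 0 ≤ α) (hb : 0 ≤ b) (hx : 0 ≤ x) (k : ℕ) :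
    0 ≤ mittagLefflerTerm α b x k :=
  div_nonneg (Real.rpow_nonneg hx _) (Real.Gamma_nonneg_of_nonneg (by positivity))

lemma rpow_mul_exp_neg_le_Gamma (hy : 1 ≤ y) (hx : 0 ≤ x) :
    x ^ (y - 1) * Real.exp (-x) ≤ Real.Gamma y := by
  have hint : IntegrableOn (fun t => Real.exp (-t) * t ^ (y - 1)) (Ioi 0) :=
    Real.GammaIntegral_convergent (by linarith)
  have hsub : Ioi x ⊆ Ioi 0 := Ioi_subset_Ioi hx
  calc x ^ (y - 1) * Real.exp (-x) = ∫ t in Ioi x, Real.exp (-t) * x ^ (y - 1) := by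
        rw [integral_mul_const, integral_exp_neg_Ioi, mul_comm]
    _ ≤ ∫ t in Ioi x, Real.exp (-t) * t ^ (y - 1) := by
        refine setIntegral_mono_on ((integrableOn_exp_neg_Ioi x).mul_const _) (hint.mono_set hsub)
          measurableSet_Ioi fun t ht => ?_
        gcongr
        exact le_of_lt ht
    _ ≤ ∫ t in Ioi 0, Real.exp (-t) * t ^ (y - 1) := by
        refine setIntegral_mono_set hint ?_ hsub.eventuallyLE
        filter_upwards [ae_restrict_mem measurableSet_Ioi] with t ht
        exact mul_nonneg (Real.exp_nonneg _) (Real.rpow_nonneg (le_of_lt ht) _)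
    _ = Real.Gamma y := (Real.Gamma_eq_integral (by linarith)).symm

lemma rpow_div_Gamma_le (hy : 1 ≤ y) (hx : 0 ≤ x) (hl : 0 < l) :
    x ^ (y - 1) / Real.Gamma y ≤ l ^ (1 - y) * Real.exp (l * x) := by
  rw [div_le_iff₀ (Real.Gamma_pos_of_pos (by linarith))]
  calc x ^ (y - 1)
      = l ^ (1 - y) * Real.exp (l * x) * ((l * x) ^ (y - 1) * Real.exp (-(l * x))) := by
        rw [Real.mul_rpow hl.le hx, Real.exp_neg, ← neg_sub, Real.rpow_neg hl.le]
        field_simp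
    _ ≤ _ := by
        gcongr
        exact rpow_mul_exp_neg_le_Gamma hy (by positivity)

lemma mittagLefflerTerm_le (hα : 0 ≤ α) (hb : 1 ≤ b) (hx : 0 ≤ x) (hl : 0 < l) (k : ℕ) :
    mittagLefflerTerm α b x k ≤ l ^ (1 - b) * (l ^ (-α)) ^ k * Real.exp (l * x) := by
  have hk : 0 ≤ α * k := by positivity
  refine (rpow_div_Gamma_le (by linarith) hx hl).trans_eq ?_
  rw [← Real.rpow_mul_natCast hl.le, ← Real.rpow_add hl]
  ring_nf

lemma hasSum_geometric_rpow (hα : 0 < α) (hl : 1 < l) (a : ℝ) :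
    HasSum (fun k : ℕ => l ^ a * (l ^ (-α)) ^ k) (l ^ a / (1 - l ^ (-α))) :=
  (hasSum_geometric_of_lt_one (by positivity)
    (Real.rpow_lt_one_of_one_lt_of_neg hl (neg_lt_zero.2 hα))).mul_left _

lemma summable_mittagLefflerTerm (hα : 0 < α) (b : ℝ) (hx : 0 ≤ x) :
    Summable (mittagLefflerTerm α b x) := by
  obtain ⟨m, hm⟩ := exists_nat_gt ((1 - b) / α)
  have hb : 1 ≤ b + α * m := by linarith [(div_lt_iff₀' hα).1 hm]
  rw [← summable_nat_add_iff m]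
  simp only [mittagLefflerTerm_add]
  exact .of_nonneg_of_le (mittagLefflerTerm_nonneg hα.le (by linarith) hx)
    (mittagLefflerTerm_le hα.le hb hx two_pos)
    ((hasSum_geometric_rpow hα one_lt_two _).summable.mul_right _)

lemma mittagLefflerKernel_eq_sum_add (hα : 0 < α) (b : ℝ) (hx : 0 ≤ x) (m : ℕ) :
    mittagLefflerKernel α b x =
      ∑ k ∈ Finset.range m, mittagLefflerTerm α b x k + mittagLefflerKernel α (b + α * m) x := by
  simp only [mittagLefflerKernel, ← mittagLefflerTerm_add]
  exact ((summable_mittagLefflerTerm hα b hx).sum_add_tsum_nat_add m).symm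

lemma norm_mittagLefflerKernel_le (hα : 0 < α) (hb : 1 ≤ b) (hx : 0 ≤ x) (hl : 1 < l) :
    ‖mittagLefflerKernel α b x‖ ≤ l ^ (1 - b) / (1 - l ^ (-α)) * Real.exp (l * x) := by
  refine tsum_of_norm_bounded ((hasSum_geometric_rpow hα hl _).mul_right _) fun k => ?_
  rw [Real.norm_of_nonneg (mittagLefflerTerm_nonneg hα.le (by linarith) hx k)]
  exact mittagLefflerTerm_le hα.le hb hx (by linarith) k

lemma continuousAt_mittagLefflerKernel (hα : 0 < α) (hb : 1 ≤ b) (hx : 0 < x) :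
    ContinuousAt (mittagLefflerKernel α b) x := by
  refine (continuousOn_tsum (s := Icc 0 (x + 1)) (fun k => ?_)
    ((hasSum_geometric_rpow hα one_lt_two (1 - b)).summable.mul_right (Real.exp (2 * (x + 1))))
    fun k t ht => ?_).continuousAt (Icc_mem_nhds hx (lt_add_one x))
  · have hk : 0 ≤ α * k := by positivity
    exact ((Real.continuous_rpow_const (by linarith)).div_const _).continuousOn
  · rw [Real.norm_of_nonneg (mittagLefflerTerm_nonneg hα.le (by linarith) ht.1 k)]
    refine (mittagLefflerTerm_le hα.le hb ht.1 two_pos k).trans ?_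
    gcongr
    exact ht.2

lemma mittagLefflerKernel_one_two (x : ℝ) : mittagLefflerKernel 1 2 x = Real.exp x - 1 := by
  have hexp := NormedSpace.expSeries_div_hasSum_exp (𝔸 := ℝ) x
  rw [← Real.exp_eq_exp_ℝ, ← hasSum_nat_add_iff' 1] at hexp
  have hterm (k : ℕ) : mittagLefflerTerm 1 2 x k = x ^ (k + 1) / (k + 1).factorial := by
    rw [mittagLefflerTerm, ← Real.Gamma_nat_eq_factorial, ← Real.rpow_natCast]
    push_cast
    ring_nf
  simpa [mittagLefflerKernel, hterm] using hexp.tsum_eq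

lemma isBigO_mittagLefflerTerm_exp (α b : ℝ) {c : ℝ} (hc : 0 < c) (k : ℕ) :
    (fun x => mittagLefflerTerm α b x k) =O[atTop] fun x => Real.exp (c * x) := by
  simpa only [mittagLefflerTerm, div_eq_inv_mul] using
    (isLittleO_rpow_exp_pos_mul_atTop (α * k + b - 1) hc).isBigO.const_mul_left _

section Laplace

lemma integrableOn_exp_neg_mul_mittagLefflerTerm (hα : 0 ≤ α) (hb : 0 < b) (hl : 0 < l) (k : ℕ) :
    IntegrableOn (fun t => Real.exp (-(l * t)) * mittagLefflerTerm α b t k) (Ioi 0) := by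
  have hk : 0 ≤ α * k := by positivity
  have h := (integrableOn_rpow_mul_exp_neg_mul_rpow (s := α * k + b - 1) (by linarith)
    one_pos hl).div_const (Real.Gamma (α * k + b))
  refine IntegrableOn.congr_fun h (fun t _ => ?_) measurableSet_Ioi
  simp only [mittagLefflerTerm, Real.rpow_one]
  ring_nf

lemma integral_exp_neg_mul_mittagLefflerTerm (hα : 0 ≤ α) (hb : 0 < b) (hl : 0 < l) (k : ℕ) :
    ∫ t in Ioi 0, Real.exp (-(l * t)) * mittagLefflerTerm α b t k =
      l ^ (-b) * (l ^ (-α)) ^ k := by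
  have hk : 0 < α * k + b := by positivity
  calc ∫ t in Ioi 0, Real.exp (-(l * t)) * mittagLefflerTerm α b t k
      = ∫ t in Ioi 0, t ^ (α * k + b - 1) * Real.exp (-(l * t)) / Real.Gamma (α * k + b) := by
        simp only [mittagLefflerTerm, mul_comm (Real.exp _), div_mul_eq_mul_div]
    _ = (1 / l) ^ (α * k + b) := by
        rw [integral_div, Real.integral_rpow_mul_exp_neg_mul_Ioi hk hl,
          mul_div_cancel_right₀ _ (Real.Gamma_pos_of_pos hk).ne']
    _ = l ^ (-b) * (l ^ (-α)) ^ k := by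
        rw [one_div, Real.inv_rpow hl.le, ← Real.rpow_neg hl.le, ← Real.rpow_mul_natCast hl.le,
          ← Real.rpow_add hl]
        ring_nf

lemma integral_exp_neg_mul_mittagLefflerKernel (hα : 0 < α) (hb : 0 < b) (hl : 1 < l) :
    ∫ t in Ioi 0, Real.exp (-(l * t)) * mittagLefflerKernel α b t =
      l ^ (-b) / (1 - l ^ (-α)) := by
  have hl0 : 0 < l := one_pos.trans hl
  have hgeom := hasSum_geometric_rpow hα hl (-b)
  have hnorm (k : ℕ) : ∫ t in Ioi 0, ‖Real.exp (-(l * t)) * mittagLefflerTerm α b t k‖ =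
      l ^ (-b) * (l ^ (-α)) ^ k := by
    rw [← integral_exp_neg_mul_mittagLefflerTerm hα.le hb hl0 k]
    refine setIntegral_congr_fun measurableSet_Ioi fun t ht => Real.norm_of_nonneg ?_
    exact mul_nonneg (Real.exp_nonneg _) (mittagLefflerTerm_nonneg hα.le hb.le (le_of_lt ht) k)
  have hsum := hasSum_integral_of_summable_integral_norm
    (fun k => (integrableOn_exp_neg_mul_mittagLefflerTerm hα.le hb hl0 k).integrable)
    (by simpa only [hnorm] using hgeom.summable)
  simp only [integral_exp_neg_mul_mittagLefflerTerm hα.le hb hl0, tsum_mul_left] at hsum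
  exact hsum.unique hgeom

variable {s : ℂ}

lemma laplaceConvergent_mittagLefflerKernel (hα : 0 < α) (hb : 1 ≤ b) (hs : 1 < s.re) :
    LaplaceConvergent (fun t => (mittagLefflerKernel α b t : ℂ)) s := by
  obtain ⟨l, hl, hls⟩ := exists_between hs
  have hcont : ContinuousOn (mittagLefflerKernel α b) (Ioi 0) := fun t ht =>
    (continuousAt_mittagLefflerKernel hα hb ht).continuousWithinAt
  refine laplaceConvergent_of_norm_le_exp
    ((Complex.continuous_ofReal.comp_continuousOn hcont).aestronglyMeasurable measurableSet_Ioi)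
    (C := l ^ (1 - b) / (1 - l ^ (-α))) (fun t ht => ?_) hls
  simpa using norm_mittagLefflerKernel_le hα hb ht.le hl

lemma differentiableOn_mittagLefflerSymbol (hα : 0 < α) (b : ℝ) :
    DifferentiableOn ℂ (mittagLefflerSymbol α b) {z : ℂ | 1 < z.re} := by
  intro z (hz : 1 < z.re)
  have hslit : z ∈ Complex.slitPlane := .inl (one_pos.trans hz)
  have hcpow (a : ℂ) : DifferentiableAt ℂ (fun w : ℂ => w ^ a) z :=
    differentiableAt_id.cpow_const hslit
  refine ((hcpow _).div ((hcpow _).const_sub 1) (sub_ne_zero.2 fun h => ?_)).differentiableWithinAt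
  have hnorm : ‖z ^ (-α : ℂ)‖ < 1 := by
    rw [← Complex.ofReal_neg, Complex.norm_cpow_real]
    exact Real.rpow_lt_one_of_one_lt_of_neg (hz.trans_le (Complex.re_le_norm z)) (neg_lt_zero.2 hα)
  simp [← h] at hnorm

theorem laplaceTransform_mittagLefflerKernel (hα : 0 < α) (hb : 1 ≤ b) (hs : 1 < s.re) :
    laplaceTransform (fun t => (mittagLefflerKernel α b t : ℂ)) s = mittagLefflerSymbol α b s := by
  refine eqOn_laplaceTransform_of_ofReal
    (fun s hs => laplaceConvergent_mittagLefflerKernel hα hb hs)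
    (differentiableOn_mittagLefflerSymbol hα b) (fun l hl => ?_) hs
  have hreal := integral_exp_neg_mul_mittagLefflerKernel hα (one_pos.trans_le hb) hl
  have hl0 : 0 ≤ l := by linarith
  calc laplaceTransform (fun t => (mittagLefflerKernel α b t : ℂ)) l
      = ((∫ t in Ioi 0, Real.exp (-(l * t)) * mittagLefflerKernel α b t : ℝ) : ℂ) := by
        rw [laplaceTransform, ← integral_complex_ofReal]
        simp
    _ = mittagLefflerSymbol α b l := by
        rw [hreal, mittagLefflerSymbol]
        push_cast [Complex.ofReal_cpow hl0]
        rfl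

end Laplace

theorem exists_norm_mittagLefflerKernel_sub_le (hα : 0 < α) (hb : 2 ≤ b) :
    ∃ c ∈ Ioo (0 : ℝ) 1, ∃ C : ℝ, ∀ x, 0 < x →
      ‖mittagLefflerKernel α b x - α⁻¹ * mittagLefflerKernel 1 2 x‖ ≤ C * Real.exp (c * x) := by
  obtain ⟨a, ha, hroot⟩ := exists_forall_cpow_eq_one_imp_eq_one hα.ne'
  obtain ⟨c, hac, hc1⟩ := exists_between ha.2
  have hdiff : DifferentiableOn ℂ (symbolRemainder α b) {z : ℂ | c ≤ z.re} :=
    (differentiableOn_symbolRemainder hα.ne' ha hroot b).mono fun z hz => hac.trans_le hz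
  obtain ⟨C, hC⟩ := exists_norm_symbolRemainder_le hα hb hdiff.continuousOn
  have hb1 : 1 ≤ b := by linarith
  have hF {s : ℂ} (hs : 1 < s.re) := laplaceConvergent_mittagLefflerKernel hα hb1 hs
  have hG {s : ℂ} (hs : 1 < s.re) := (laplaceConvergent_mittagLefflerKernel one_pos one_le_two
    hs).const_smul ((α⁻¹ : ℝ) : ℂ)
  have htransform (s : ℂ) (hs : s.re = 2) : laplaceTransform (fun t =>
      (mittagLefflerKernel α b t : ℂ) - ((α⁻¹ : ℝ) : ℂ) • (mittagLefflerKernel 1 2 t : ℂ)) s =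
      symbolRemainder α b s := by
    have hs1 : 1 < s.re := by linarith
    rw [laplaceTransform_sub (hF hs1) (hG hs1), laplaceTransform_const_smul,
      laplaceTransform_mittagLefflerKernel hα hb1 hs1,
      laplaceTransform_mittagLefflerKernel one_pos one_le_two hs1, smul_eq_mul,
      symbolRemainder_eq_sub (by rintro rfl; simp at hs) (by rintro rfl; simp at hs)]
  refine ⟨c, ⟨ha.1.trans hac, hc1⟩, C / 2, fun x hx => ?_⟩
  have hcont : ContinuousAt (fun t => (mittagLefflerKernel α b t : ℂ) -
      ((α⁻¹ : ℝ) : ℂ) • (mittagLefflerKernel 1 2 t : ℂ)) x :=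
    (continuousAt_mittagLefflerKernel hα hb1 hx).ofReal.sub
      ((continuousAt_mittagLefflerKernel one_pos one_le_two hx).ofReal.const_smul _)
  have h := norm_le_exp_of_laplaceTransform_eq (σ := 2) (by linarith) hx hdiff hC
    ((hF (by simp)).sub (hG (by simp))) htransform hcont
  rwa [smul_eq_mul, ← Complex.ofReal_mul, ← Complex.ofReal_sub, Complex.norm_real] at h

theorem exists_isBigO_mittagLefflerKernel_sub_exp (hα : 0 < α) (b : ℝ) :
    ∃ c < 1, (fun x => mittagLefflerKernel α b x - α⁻¹ * Real.exp x) =O[atTop]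
      fun x => Real.exp (c * x) := by
  obtain ⟨m, hm⟩ := exists_nat_gt ((2 - b) / α)
  have hb : 2 ≤ b + α * m := by linarith [(div_lt_iff₀' hα).1 hm]
  obtain ⟨c, hc, C, hC⟩ := exists_norm_mittagLefflerKernel_sub_le hα hb
  have htail : (fun x => mittagLefflerKernel α (b + α * m) x - α⁻¹ * mittagLefflerKernel 1 2 x)
      =O[atTop] fun x => Real.exp (c * x) := by
    refine .of_bound C ?_
    filter_upwards [eventually_gt_atTop 0] with x hx
    simpa using hC x hx
  have hpowers : (fun x => ∑ k ∈ Finset.range m, mittagLefflerTerm α b x k)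
      =O[atTop] fun x => Real.exp (c * x) :=
    .fun_sum fun k _ => isBigO_mittagLefflerTerm_exp α b hc.1 k
  have hconst : (fun _ : ℝ => α⁻¹) =O[atTop] fun x => Real.exp (c * x) := by
    refine .of_bound |α⁻¹| ?_
    filter_upwards [eventually_ge_atTop 0] with x hx
    simpa using le_mul_of_one_le_right (abs_nonneg α⁻¹)
      (Real.one_le_exp (mul_nonneg hc.1.le hx))
  refine ⟨c, hc.2, ((hpowers.add htail).sub hconst).congr' ?_ .rfl⟩
  filter_upwards [eventually_ge_atTop 0] with x hx
  rw [mittagLefflerKernel_eq_sum_add hα b hx m, mittagLefflerKernel_one_two]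
  ring

end Kernel

section Moment

variable {α b x : ℝ} (r : ℕ → ℝ) (n : ℕ)

/-- The sum of `mittagLefflerKernel α b x` with its `k`-th term weighted by the polynomial
`∏ i < n, (k + r i)`. -/
noncomputable def mittagLefflerMoment (α b : ℝ) (r : ℕ → ℝ) (n : ℕ) (x : ℝ) : ℝ :=
  ∑' k : ℕ, (∏ i ∈ Finset.range n, (k + r i)) * mittagLefflerTerm α b x k

lemma mul_inv_Gamma_add_one (s : ℝ) : s * (Real.Gamma (s + 1))⁻¹ = (Real.Gamma s)⁻¹ := by
  rcases eq_or_ne s 0 with rfl | hs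
  · simp
  · rw [Real.Gamma_add_one hs, mul_inv, mul_inv_cancel_left₀ hs]

lemma add_mul_mittagLefflerTerm (hα : α ≠ 0) (hx : x ≠ 0) (a : ℝ) (k : ℕ) :
    (k + a) * mittagLefflerTerm α b x k =
      α⁻¹ * x * mittagLefflerTerm α (b - 1) x k +
      (a - (b - 1) / α) * mittagLefflerTerm α b x k := by
  have hshift : (α * k + b - 1) * mittagLefflerTerm α b x k =
      x * mittagLefflerTerm α (b - 1) x k := by
    have hGamma := mul_inv_Gamma_add_one (α * k + b - 1)
    have hpow := Real.rpow_sub_one hx (α * k + b - 1)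
    simp only [mittagLefflerTerm, ← add_sub_assoc, hpow, div_eq_mul_inv, ← hGamma]
    rw [sub_add_cancel]
    field_simp
  rw [mul_assoc, ← hshift]
  field_simp
  ring

lemma prod_range_succ_mul_mittagLefflerTerm (hα : α ≠ 0) (hx : x ≠ 0) (k : ℕ) :
    (∏ i ∈ Finset.range (n + 1), (k + r i)) * mittagLefflerTerm α b x k =
      α⁻¹ * x * ((∏ i ∈ Finset.range n, (k + r i)) * mittagLefflerTerm α (b - 1) x k) +
      (r n - (b - 1) / α) * ((∏ i ∈ Finset.range n, (k + r i)) * mittagLefflerTerm α b x k) := by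
  rw [Finset.prod_range_succ, mul_assoc, add_mul_mittagLefflerTerm hα hx]
  ring

lemma summable_mittagLefflerMoment (hα : 0 < α) (b : ℝ) (hx : 0 < x) :
    Summable fun k : ℕ => (∏ i ∈ Finset.range n, (k + r i)) * mittagLefflerTerm α b x k := by
  induction n generalizing b with
  | zero => simpa using summable_mittagLefflerTerm hα b hx.le
  | succ n ih =>
    simp only [prod_range_succ_mul_mittagLefflerTerm r n hα.ne' hx.ne']
    exact ((ih (b - 1)).mul_left _).add ((ih b).mul_left _)

lemma mittagLefflerMoment_succ (hα : 0 < α) (b : ℝ) (hx : 0 < x) :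
    mittagLefflerMoment α b r (n + 1) x = α⁻¹ * x * mittagLefflerMoment α (b - 1) r n x +
      (r n - (b - 1) / α) * mittagLefflerMoment α b r n x := by
  have hsummable := summable_mittagLefflerMoment r n hα (hx := hx)
  simp only [mittagLefflerMoment, prod_range_succ_mul_mittagLefflerTerm r n hα.ne' hx.ne']
  rw [((hsummable (b - 1)).mul_left _).tsum_add ((hsummable b).mul_left _), tsum_mul_left,
    tsum_mul_left]

lemma isBigO_mittagLefflerMoment_zero_sub (hα : 0 < α) (b : ℝ) :
    (fun x => mittagLefflerMoment α b r 0 x - α⁻¹ * Real.exp x) =O[atTop]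
      fun x => Real.exp x / x := by
  obtain ⟨c, hc, hkernel⟩ := exists_isBigO_mittagLefflerKernel_sub_exp hα b
  have hexp : (fun x => Real.exp (c * x)) =O[atTop] fun x => Real.exp x / x := by
    refine ((isLittleO_exp_mul_rpow_of_lt 1 hc).isBigO.mul
      (isBigO_refl (fun x : ℝ => x⁻¹) atTop)).congr' ?_ (by simp [div_eq_mul_inv])
    filter_upwards [eventually_ne_atTop 0] with x hx
    rw [Real.rpow_one, mul_inv_cancel_right₀ hx]
  simpa [mittagLefflerMoment, mittagLefflerKernel] using hkernel.trans hexp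

theorem isBigO_mittagLefflerMoment_sub (hα : 0 < α) (b : ℝ) :
    (fun x => mittagLefflerMoment α b r n x - α⁻¹ ^ (n + 1) * (x ^ n * Real.exp x)) =O[atTop]
      fun x => x ^ n * Real.exp x / x := by
  induction n generalizing b with
  | zero => simpa using isBigO_mittagLefflerMoment_zero_sub r hα b
  | succ n ih =>
    have htarget : (fun x : ℝ => x ^ (n + 1) * Real.exp x / x) =ᶠ[atTop]
        fun x => x ^ n * Real.exp x := by
      filter_upwards [eventually_ne_atTop 0] with x hx
      rw [pow_succ']
      field_simp
    have hdiv : (fun x : ℝ => x ^ n * Real.exp x / x) =O[atTop] fun x => x ^ n * Real.exp x := by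
      refine .of_bound 1 ?_
      filter_upwards [eventually_ge_atTop 1] with x hx
      rw [one_mul, norm_div]
      exact div_le_self (norm_nonneg _) (hx.trans (le_abs_self x))
    have hmain : (fun x => α⁻¹ * x * (mittagLefflerMoment α (b - 1) r n x -
        α⁻¹ ^ (n + 1) * (x ^ n * Real.exp x))) =O[atTop] fun x => x ^ n * Real.exp x := by
      refine (((isBigO_refl (fun x : ℝ => x) atTop).const_mul_left α⁻¹).mul (ih (b - 1))).congr'
        .rfl ?_
      filter_upwards [eventually_ne_atTop 0] with x hx
      field_simp
    have hlower : (mittagLefflerMoment α b r n) =O[atTop] fun x => x ^ n * Real.exp x := by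
      simpa using ((ih b).trans hdiv).add ((isBigO_refl _ atTop).const_mul_left (α⁻¹ ^ (n + 1)))
    refine ((hmain.add (hlower.const_mul_left (r n - (b - 1) / α))).congr' ?_ .rfl)
      |>.trans_eventuallyEq htarget.symm
    filter_upwards [eventually_gt_atTop 0] with x hx
    rw [mittagLefflerMoment_succ r n hα b hx]
    ring

end Moment

section Prabhakar

variable {α x : ℝ} (γ : ℕ)

lemma ascPochhammer_eval_natCast_add_one_div_factorial (k : ℕ) :
    (ascPochhammer ℝ k).eval ((γ : ℝ) + 1) / k.factorial =
      (∏ i ∈ Finset.range γ, ((k : ℝ) + (i + 1))) / γ.factorial := by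
  have heval : (ascPochhammer ℝ k).eval ((γ : ℝ) + 1) = ((γ + 1).ascFactorial k : ℝ) := by
    rw [← ascPochhammer_nat_eq_ascFactorial, ascPochhammer_eval_cast, Nat.cast_succ]
  have hprod : ∏ i ∈ Finset.range γ, ((k : ℝ) + (i + 1)) = ((k + 1).ascFactorial γ : ℝ) := by
    rw [Nat.ascFactorial_eq_prod_range]
    push_cast
    exact Finset.prod_congr rfl fun i _ => by ring
  rw [heval, hprod, div_eq_div_iff (by positivity) (by positivity)]
  norm_cast
  rw [mul_comm, Nat.factorial_mul_ascFactorial, mul_comm, Nat.factorial_mul_ascFactorial, add_comm]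

lemma prabhakar_rpow_eq_mittagLefflerMoment (β : ℝ) (hx : 0 < x) :
    prabhakar α β (γ + 1) (x ^ α) =
      (γ.factorial : ℝ)⁻¹ * x ^ (1 - β) * mittagLefflerMoment α β (fun i => i + 1) γ x := by
  rw [prabhakar, mittagLefflerMoment, ← tsum_mul_left]
  refine tsum_congr fun k => ?_
  have hpow : (x ^ α) ^ k = x ^ (1 - β) * x ^ (α * k + β - 1) := by
    rw [← Real.rpow_mul_natCast hx.le, ← Real.rpow_add hx]
    ring_nf
  rw [hpow, ← div_div, mul_div_assoc, ascPochhammer_eval_natCast_add_one_div_factorial,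
    mittagLefflerTerm]
  ring

theorem isBigO_prabhakar_rpow (hα : 0 < α) (β : ℝ) :
    (fun x : ℝ => α ^ (γ + 1) * (γ.factorial : ℝ) * Real.exp (-x) * x ^ (-((γ : ℝ) + 1 - β))
        * prabhakar α β ((γ : ℝ) + 1) (x ^ α) - 1) =O[atTop] fun x => x⁻¹ := by
  have hweight : (fun x : ℝ => α ^ (γ + 1) * (x ^ γ * Real.exp x)⁻¹) =O[atTop]
      fun x => (x ^ γ * Real.exp x)⁻¹ := (isBigO_refl _ _).const_mul_left _
  refine (hweight.mul (isBigO_mittagLefflerMoment_sub (fun i => i + 1) γ hα β)).congr' ?_ ?_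
  · filter_upwards [eventually_gt_atTop 0] with x hx
    have hpow : x ^ (-((γ : ℝ) + 1 - β)) * x ^ (1 - β) = (x ^ γ)⁻¹ := by
      rw [← Real.rpow_add hx, ← Real.rpow_natCast, ← Real.rpow_neg hx.le]
      ring_nf
    have hlead : α ^ (γ + 1) * (x ^ γ * Real.exp x)⁻¹ *
        (α⁻¹ ^ (γ + 1) * (x ^ γ * Real.exp x)) = 1 := by
      rw [inv_pow]
      field_simp
    rw [mul_sub, hlead, prabhakar_rpow_eq_mittagLefflerMoment γ β hx, mul_inv, ← hpow,
      Real.exp_neg]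
    have hfactorial : (γ.factorial : ℝ) ≠ 0 := by positivity
    field_simp
  · filter_upwards [eventually_gt_atTop 0] with x hx
    field_simp

theorem prabhakar_asymptotics_general (hα : 0 < α) (β : ℝ) :
    (fun u : ℝ => α ^ (γ + 1) * (γ.factorial : ℝ) * Real.exp (-(u ^ (1 / α)))
        * u ^ (-(((γ : ℝ) + 1 - β) / α)) * prabhakar α β ((γ : ℝ) + 1) u - 1)
      =O[atTop] (fun u : ℝ => u ^ (-(1 / α))) := by
  refine ((isBigO_prabhakar_rpow γ hα β).comp_tendsto
    (tendsto_rpow_atTop (one_div_pos.2 hα))).congr' ?_ ?_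
  · filter_upwards [eventually_ge_atTop 0] with u hu
    simp only [Function.comp_apply, ← Real.rpow_mul hu]
    rw [one_div_mul_cancel hα.ne', Real.rpow_one]
    ring_nf
  · filter_upwards [eventually_ge_atTop 0] with u hu
    exact (Real.rpow_neg hu _).symm

end Prabhakar

/-- Eq. (2.5) of the paper: for `α ∈ (0,1]`, `β > 0` and a positive integer `γ`,
`E^{γ+1}_{α,β}(u) = e^{u^{1/α}} u^{(γ+1-β)/α} / (α^{γ+1} γ!) · (1 + O(u^{-1/α}))` as `u → ∞`. -/
theorem prabhakar_asymptotics
    (α β : ℝ) (γ : ℕ)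
    (hα : α ∈ Set.Ioc (0 : ℝ) 1) (hβ : 0 < β) (hγ : 1 ≤ γ) :
    (fun u : ℝ => α ^ (γ + 1) * (γ.factorial : ℝ) * Real.exp (-(u ^ (1 / α)))
        * u ^ (-(((γ : ℝ) + 1 - β) / α)) * prabhakar α β ((γ : ℝ) + 1) u - 1)
      =O[atTop] (fun u : ℝ => u ^ (-(1 / α))) :=
  prabhakar_asymptotics_general γ hα.1 β
end

section
/- Let α ∈ (0,1], β > 0, λ > 0 and let γ be a positive integer. Let δ, u : (0,∞) → (0,∞) be functions with δ(t) → ∞ and u(t) → 1 as t → ∞. Then lim_{t→∞} [ log( E^γ_{α,β}(λ u(t) δ(t)) / E^γ_{α,β}(λ δ(t)) ) − (λδ(t))^{1/α} ( (u(t))^{1/α} − 1 ) ] = 0. -/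
open Filter Topology

/-! Since `Γ(x + a) ~ x^a Γ(x)`, the coefficients of `E^γ_{α,β}` are asymptotically a constant
multiple of those of the two-parameter function `E_{α,β+1-γ}`, and an Abelian comparison of power
series carries this over to the functions themselves as `x → ∞`.

With `x = s^α`, `e^{-s} s^{β-1} E_{α,β}(x)` is the sum over the progression `αk + β` of the Poisson
weight `y ↦ e^{-s} s^{y-1} / Γ(y)`. This weight is log-concave in `y`, hence unimodal, and
`O(s^{-1/2})` uniformly in `y ≥ 2`, so for `β ≥ 2` the sum times `α` differs from the integral of
the weight over `(β, ∞)` by `O(s^{-1/2})`. For step `1` the sum is the total mass of a Poisson law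
up to `e^{-s}`, so these integrals tend to `1`, and `E_{α,β}(x) ~ α⁻¹ x^{(1-β)/α} exp(x^{1/α})`.
Smaller `β` are reached through `E_{α,β}(x) = 1/Γ(β) + x E_{α,β+α}(x)`.

Hence `E^γ_{α,β}(x) ~ C x^{(γ-β)/α} exp(x^{1/α})`, and in the ratio of the values at `xu` and `x`
the power contributes only `u^{(γ-β)/α} → 1`. -/

open Asymptotics MeasureTheory Set

section RiemannSums

variable {f : ℝ → ℝ}

lemma integral_sub_sum_mem_Icc_of_monotoneOn {x₀ : ℝ} {N : ℕ}
    (hf : MonotoneOn f (Icc x₀ (x₀ + N))) :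
    (∫ x in x₀..x₀ + N, f x) - ∑ k ∈ Finset.range N, f (x₀ + k)
      ∈ Icc 0 (f (x₀ + N) - f x₀) := by
  have hshift := Finset.sum_range_sub (fun k : ℕ => f (x₀ + k)) N
  rw [Finset.sum_sub_distrib] at hshift
  have hlower := hf.sum_le_integral
  have hupper := hf.integral_le_sum
  simp only [Nat.cast_zero, add_zero] at hshift
  constructor <;> linarith

lemma exists_monotoneOn_antitoneOn_of_quasiconcaveOn {a b : ℝ} (hab : a ≤ b)
    (hf : QuasiconcaveOn ℝ (Icc a b) f) (hcont : ContinuousOn f (Icc a b)) :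
    ∃ c ∈ Icc a b, MonotoneOn f (Icc a c) ∧ AntitoneOn f (Icc c b) := by
  obtain ⟨c, hc, hmax⟩ := isCompact_Icc.exists_isMaxOn (nonempty_Icc.2 hab) hcont
  refine ⟨c, hc, fun x hx y hy hxy => ?_, fun x hx y hy hxy => ?_⟩
  · have hx' : x ∈ Icc a b := ⟨hx.1, hx.2.trans hc.2⟩
    exact ((hf (f x)).ordConnected.out ⟨hx', le_rfl⟩ ⟨hc, hmax hx'⟩ ⟨hxy, hy.2⟩).2
  · have hy' : y ∈ Icc a b := ⟨hc.1.trans hy.1, hy.2⟩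
    exact ((hf (f y)).ordConnected.out ⟨hc, hmax hy'⟩ ⟨hy', le_rfl⟩ ⟨hx.1, hxy⟩).2

-- The rising and the falling part of `f` contribute errors of opposite signs.
lemma abs_sum_sub_integral_le_of_unimodal {x₀ c : ℝ} {N : ℕ} (hc : c ∈ Icc x₀ (x₀ + N))
    (hmono : MonotoneOn f (Icc x₀ c)) (hanti : AntitoneOn f (Icc c (x₀ + N)))
    (hleft : 0 ≤ f x₀) (hright : 0 ≤ f (x₀ + N)) :
    |∑ k ∈ Finset.range N, f (x₀ + k) - ∫ x in x₀..x₀ + N, f x| ≤ f c := by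
  have hN : x₀ ≤ x₀ + N := hc.1.trans hc.2
  have hrise : MonotoneOn (fun x => f (min x c)) (Icc x₀ (x₀ + N)) := fun x hx y hy hxy =>
    hmono ⟨le_min hx.1 hc.1, min_le_right _ _⟩ ⟨le_min hy.1 hc.1, min_le_right _ _⟩
      (min_le_min_right _ hxy)
  have hfall : MonotoneOn (fun x => -f (max x c)) (Icc x₀ (x₀ + N)) := fun x hx y hy hxy =>
    neg_le_neg <| hanti ⟨le_max_right _ _, max_le hx.2 hc.2⟩ ⟨le_max_right _ _, max_le hy.2 hc.2⟩
      (max_le_max_right _ hxy)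
  have hsplit : ∀ x, f x = f (min x c) - -f (max x c) - f c := fun x => by
    rcases le_total x c with h | h <;> simp [h]
  have hrise_int : IntervalIntegrable (fun x => f (min x c)) volume x₀ (x₀ + N) :=
    MonotoneOn.intervalIntegrable (by rwa [uIcc_of_le hN])
  have hfall_int : IntervalIntegrable (fun x => -f (max x c)) volume x₀ (x₀ + N) :=
    MonotoneOn.intervalIntegrable (by rwa [uIcc_of_le hN])
  have hsum : ∑ k ∈ Finset.range N, f (x₀ + k) = ∑ k ∈ Finset.range N, f (min (x₀ + k) c)
      - ∑ k ∈ Finset.range N, -f (max (x₀ + k) c) - N * f c := by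
    rw [Finset.sum_congr rfl fun (k : ℕ) _ => hsplit (x₀ + k), Finset.sum_sub_distrib,
      Finset.sum_sub_distrib]
    simp
  have hint : ∫ x in x₀..x₀ + N, f x = (∫ x in x₀..x₀ + N, f (min x c))
      - (∫ x in x₀..x₀ + N, -f (max x c)) - N * f c := by
    rw [intervalIntegral.integral_congr fun x _ => hsplit x,
      intervalIntegral.integral_sub (hrise_int.sub hfall_int) (by simp),
      intervalIntegral.integral_sub hrise_int hfall_int]
    simp
  have hrise_err := integral_sub_sum_mem_Icc_of_monotoneOn hrise
  have hfall_err := integral_sub_sum_mem_Icc_of_monotoneOn hfall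
  simp only [min_eq_right hc.2, min_eq_left hc.1, max_eq_left hc.2, max_eq_right hc.1]
    at hrise_err hfall_err
  rw [hsum, hint, abs_le]
  constructor <;> linarith [hrise_err.1, hrise_err.2, hfall_err.1, hfall_err.2]

lemma abs_mul_sum_sub_integral_le_of_quasiconcaveOn {a b M : ℝ} (ha : 0 < a)
    (hf : QuasiconcaveOn ℝ (Ici b) f) (hcont : ContinuousOn f (Ici b))
    (hfM : ∀ x ∈ Ici b, f x ∈ Icc 0 M) (N : ℕ) :
    |a * ∑ k ∈ Finset.range N, f (a * k + b) - ∫ x in b..a * N + b, f x| ≤ a * M := by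
  have hmaps : MapsTo (fun x : ℝ => a * x + b) (Icc 0 (0 + N)) (Ici b) := fun x hx =>
    le_add_of_nonneg_left (mul_nonneg ha.le hx.1)
  have hquasi : QuasiconcaveOn ℝ (Icc 0 (0 + (N : ℝ))) fun x => f (a * x + b) := by
    rw [quasiconcaveOn_iff_min_le]
    refine ⟨convex_Icc _ _, fun x hx y hy p q hp hq hpq => ?_⟩
    convert (quasiconcaveOn_iff_min_le.1 hf).2 (hmaps hx) (hmaps hy) hp hq hpq using 2
    simp only [smul_eq_mul]
    linear_combination (-b) * hpq
  obtain ⟨c, hc, hmono, hanti⟩ := exists_monotoneOn_antitoneOn_of_quasiconcaveOn (by simp) hquasi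
    (hcont.comp (by fun_prop) hmaps)
  have hunit := (abs_sum_sub_integral_le_of_unimodal hc hmono hanti
    (hfM _ (hmaps (left_mem_Icc.2 (by simp)))).1
    (hfM _ (hmaps (right_mem_Icc.2 (by simp)))).1).trans (hfM _ (hmaps hc)).2
  rw [intervalIntegral.integral_comp_mul_add f ha.ne'] at hunit
  have hscaled := mul_le_mul_of_nonneg_left hunit ha.le
  rw [← abs_of_pos ha, ← abs_mul, abs_of_pos ha, mul_sub, smul_eq_mul,
    mul_inv_cancel_left₀ ha.ne'] at hscaled
  simpa using hscaled

lemma integrableOn_Ioi_of_quasiconcaveOn_of_summable {a b M : ℝ} (ha : 0 < a)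
    (hf : QuasiconcaveOn ℝ (Ici b) f) (hcont : ContinuousOn f (Ici b))
    (hfM : ∀ x ∈ Ici b, f x ∈ Icc 0 M)
    (hsum : Summable fun k : ℕ => f (a * k + b)) : IntegrableOn f (Ioi b) := by
  have hb : Tendsto (fun N : ℕ => a * N + b) atTop atTop :=
    tendsto_atTop_add_const_right _ _ (tendsto_natCast_atTop_atTop.const_mul_atTop ha)
  refine integrableOn_Ioi_of_intervalIntegral_norm_bounded (a * ∑' k : ℕ, f (a * k + b) + a * M) b
    (fun N => ?_) hb (Eventually.of_forall fun N => ?_)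
  · exact ((hcont.mono Icc_subset_Ici_self).integrableOn_Icc).mono_set Ioc_subset_Icc_self
  have hbN : b ≤ a * N + b := le_add_of_nonneg_left (by positivity)
  have hterm : ∀ k : ℕ, 0 ≤ f (a * k + b) := fun k =>
    (hfM _ (le_add_of_nonneg_left (by positivity : 0 ≤ a * k))).1
  have hpartial := mul_le_mul_of_nonneg_left (hsum.sum_le_tsum (Finset.range N)
    fun k _ => hterm k) ha.le
  have herr := (abs_le.1 (abs_mul_sum_sub_integral_le_of_quasiconcaveOn ha hf hcont hfM N)).1
  have hnorm : ∫ x in b..a * N + b, ‖f x‖ = ∫ x in b..a * N + b, f x :=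
    intervalIntegral.integral_congr fun x hx =>
      Real.norm_of_nonneg (hfM x (uIcc_of_le hbN ▸ hx).1).1
  linarith

lemma abs_mul_tsum_sub_integral_Ioi_le_of_quasiconcaveOn {a b M : ℝ} (ha : 0 < a)
    (hf : QuasiconcaveOn ℝ (Ici b) f) (hcont : ContinuousOn f (Ici b))
    (hfM : ∀ x ∈ Ici b, f x ∈ Icc 0 M)
    (hsum : Summable fun k : ℕ => f (a * k + b)) :
    |a * ∑' k : ℕ, f (a * k + b) - ∫ x in Ioi b, f x| ≤ a * M := by
  have hb : Tendsto (fun N : ℕ => a * N + b) atTop atTop :=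
    tendsto_atTop_add_const_right _ _ (tendsto_natCast_atTop_atTop.const_mul_atTop ha)
  have hint := intervalIntegral_tendsto_integral_Ioi b
    (integrableOn_Ioi_of_quasiconcaveOn_of_summable ha hf hcont hfM hsum) hb
  exact le_of_tendsto' ((hsum.hasSum.tendsto_sum_nat.const_mul a).sub hint).abs
    (abs_mul_sum_sub_integral_le_of_quasiconcaveOn ha hf hcont hfM)

end RiemannSums

section GammaRatio

lemma Gamma_add_le_rpow_mul_Gamma {x a : ℝ} (hx : 0 < x) (ha : a ∈ Icc 0 1) :
    Real.Gamma (x + a) ≤ x ^ a * Real.Gamma x := by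
  have hΓ := Real.Gamma_pos_of_pos hx
  have hconv := Real.convexOn_log_Gamma.2 (mem_Ioi.2 hx) (mem_Ioi.2 (add_pos hx one_pos))
    (sub_nonneg.2 ha.2) ha.1 (sub_add_cancel 1 a)
  rw [smul_eq_mul, smul_eq_mul, show (1 - a) * x + a * (x + 1) = x + a by ring] at hconv
  simp only [Function.comp_apply, Real.Gamma_add_one hx.ne', Real.log_mul hx.ne' hΓ.ne',
    smul_eq_mul] at hconv
  rw [← Real.log_le_log_iff (Real.Gamma_pos_of_pos (by linarith [ha.1])) (by positivity),
    Real.log_mul (by positivity) hΓ.ne', Real.log_rpow hx]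
  linarith

lemma rpow_mul_Gamma_le_Gamma_add {x a : ℝ} (hx : 0 < x) (ha : a ∈ Icc 0 1) :
    x * (x + a) ^ (a - 1) * Real.Gamma x ≤ Real.Gamma (x + a) := by
  have hxa : 0 < x + a := by linarith [ha.1]
  have h := Gamma_add_le_rpow_mul_Gamma hxa (a := 1 - a) ⟨by linarith [ha.2], by linarith [ha.1]⟩
  rw [show x + a + (1 - a) = x + 1 by ring, Real.Gamma_add_one hx.ne'] at h
  calc x * (x + a) ^ (a - 1) * Real.Gamma x = (x + a) ^ (a - 1) * (x * Real.Gamma x) := by ring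
    _ ≤ (x + a) ^ (a - 1) * ((x + a) ^ (1 - a) * Real.Gamma (x + a)) := by gcongr
    _ = Real.Gamma (x + a) := by
      rw [← mul_assoc, ← Real.rpow_add hxa]
      simp

lemma isEquivalent_add_const_atTop (a : ℝ) : (fun x : ℝ => x + a) ~[atTop] fun x => x :=
  IsEquivalent.refl.add_isLittleO (isLittleO_const_id_atTop a)

lemma isEquivalent_Gamma_add_of_mem_Icc {a : ℝ} (ha : a ∈ Icc 0 1) :
    (fun x => Real.Gamma (x + a)) ~[atTop] fun x => x ^ a * Real.Gamma x := by
  apply isEquivalent_of_tendsto_one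
  have hshift : Tendsto (fun x : ℝ => ((x + a) / x) ^ (a - 1)) atTop (𝓝 1) := by
    have := (isEquivalent_iff_tendsto_one (eventually_ne_atTop 0)).1
      (isEquivalent_add_const_atTop a)
    simpa using this.rpow_const (p := a - 1) (Or.inl one_ne_zero)
  refine tendsto_of_tendsto_of_tendsto_of_le_of_le' hshift tendsto_const_nhds ?_ ?_
  all_goals
    filter_upwards [eventually_gt_atTop 0] with x hx
    have hden := mul_pos (Real.rpow_pos_of_pos hx a) (Real.Gamma_pos_of_pos hx)
  · have hxa : 0 < x + a := by linarith [ha.1]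
    rw [Pi.div_apply, le_div_iff₀ hden]
    refine (rpow_mul_Gamma_le_Gamma_add hx ha).trans_eq' ?_
    rw [Real.div_rpow hxa.le hx.le, Real.rpow_sub_one hx.ne']
    field_simp
  · rw [Pi.div_apply, div_le_one hden]
    exact Gamma_add_le_rpow_mul_Gamma hx ha

lemma isEquivalent_Gamma_add_add_one_iff {a : ℝ} :
    ((fun x => Real.Gamma (x + (a + 1))) ~[atTop] fun x => x ^ (a + 1) * Real.Gamma x) ↔
      (fun x => Real.Gamma (x + a)) ~[atTop] fun x => x ^ a * Real.Gamma x := by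
  have hleft : (fun x => Real.Gamma (x + (a + 1))) =ᶠ[atTop]
      (fun x => x + a) * fun x => Real.Gamma (x + a) := by
    filter_upwards [eventually_gt_atTop (-a)] with x hx
    rw [← add_assoc, Real.Gamma_add_one (by linarith), Pi.mul_apply]
  have hright : (fun x => x ^ (a + 1) * Real.Gamma x) =ᶠ[atTop]
      (fun x => x) * fun x => x ^ a * Real.Gamma x := by
    filter_upwards [eventually_gt_atTop 0] with x hx
    rw [Pi.mul_apply, Real.rpow_add_one hx.ne']
    ring
  have hfactor := isEquivalent_add_const_atTop a
  refine ⟨fun h => ?_, fun h => ((hfactor.mul h).congr_left hleft.symm).congr_right hright.symm⟩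
  have hquot := ((h.congr_left hleft).congr_right hright).div hfactor
  refine (hquot.congr_left ?_).congr_right ?_
  · filter_upwards [eventually_gt_atTop (-a)] with x hx
    exact mul_div_cancel_left₀ _ (by linarith : x + a ≠ 0)
  · filter_upwards [eventually_ne_atTop 0] with x hx
    exact mul_div_cancel_left₀ _ hx

theorem isEquivalent_Gamma_add (a : ℝ) :
    (fun x => Real.Gamma (x + a)) ~[atTop] fun x => x ^ a * Real.Gamma x := by
  suffices h : ∀ n : ℤ, (fun x => Real.Gamma (x + (Int.fract a + n))) ~[atTop]
      fun x => x ^ (Int.fract a + n) * Real.Gamma x by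
    simpa only [Int.fract_add_floor] using h ⌊a⌋
  intro n
  induction n using Int.induction_on with
  | zero =>
    simpa using isEquivalent_Gamma_add_of_mem_Icc ⟨Int.fract_nonneg a, (Int.fract_lt_one a).le⟩
  | succ n ih =>
    push_cast
    rw [← add_assoc]
    exact isEquivalent_Gamma_add_add_one_iff.2 (mod_cast ih)
  | pred n ih =>
    apply isEquivalent_Gamma_add_add_one_iff.1
    push_cast at ih ⊢
    rwa [← add_sub_assoc, sub_add_cancel]

lemma isEquivalent_Gamma_add_div_Gamma_add (a b : ℝ) :
    (fun x => Real.Gamma (x + a) / Real.Gamma (x + b)) ~[atTop] fun x => x ^ (a - b) := by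
  refine ((isEquivalent_Gamma_add a).div (isEquivalent_Gamma_add b)).congr_right ?_
  filter_upwards [eventually_gt_atTop 0] with x hx
  have := (Real.Gamma_pos_of_pos hx).ne'
  rw [Pi.div_apply, Real.rpow_sub hx]
  field_simp

lemma summable_inv_Gamma_mul_pow {a : ℝ} (ha : 0 < a) (b x : ℝ) :
    Summable fun k : ℕ => (Real.Gamma (a * k + b))⁻¹ * x ^ k := by
  rcases eq_or_ne x 0 with rfl | hx
  · exact summable_of_ne_finset_zero (s := {0}) fun k hk => by
      simp [zero_pow (Finset.notMem_singleton.1 hk)]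
  have harg : Tendsto (fun k : ℕ => a * k + b) atTop atTop :=
    tendsto_atTop_add_const_right _ _ (tendsto_natCast_atTop_atTop.const_mul_atTop ha)
  have hpos := harg.eventually_gt_atTop 0
  have hratio : (fun k : ℕ => Real.Gamma (a * k + b) / Real.Gamma (a * k + b + a)) ~[atTop]
      fun k : ℕ => (a * k + b) ^ (-a) := by
    refine (IsEquivalent.refl.div ((isEquivalent_Gamma_add a).comp_tendsto harg)).congr_right ?_
    filter_upwards [hpos] with k hk
    have := (Real.Gamma_pos_of_pos hk).ne'
    simp only [Pi.div_apply, Function.comp_apply, Real.rpow_neg hk.le]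
    field_simp
  have hratio_zero :=
    (hratio.symm.tendsto_nhds ((tendsto_rpow_neg_atTop ha).comp harg)).mul_const |x|
  rw [zero_mul] at hratio_zero
  refine summable_of_ratio_test_tendsto_lt_one zero_lt_one ?_ (hratio_zero.congr' ?_)
  · filter_upwards [hpos] with k hk
    have := (Real.Gamma_pos_of_pos hk).ne'
    positivity
  · filter_upwards [hpos] with k hk
    have hΓ := Real.Gamma_pos_of_pos hk
    have hΓ' : 0 < Real.Gamma (a * k + b + a) := Real.Gamma_pos_of_pos (by positivity)
    rw [Nat.cast_succ, mul_add_one, add_right_comm (a * (k : ℝ)) a, norm_mul, norm_mul, norm_inv,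
      norm_inv, Real.norm_of_nonneg hΓ.le, Real.norm_of_nonneg hΓ'.le, pow_succ, norm_mul,
      Real.norm_eq_abs x]
    have := abs_pos.2 hx
    field_simp

end GammaRatio

section PowerSeries

variable {c d : ℕ → ℝ}

lemma isLittleO_sum_range_mul_pow (c : ℕ → ℝ) (n : ℕ) :
    (fun x : ℝ => ∑ k ∈ Finset.range n, c k * x ^ k) =o[atTop] fun x => x ^ n :=
  IsLittleO.fun_sum fun k hk =>
    (isLittleO_pow_pow_atTop_of_lt (Finset.mem_range.1 hk)).const_mul_left (c k)

lemma isLittleO_pow_tsum_mul_pow (hd : ∀ᶠ k in atTop, 0 < d k)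
    (hsum : ∀ᶠ x in atTop, Summable fun k => d k * x ^ k) (n : ℕ) :
    (fun x : ℝ => x ^ n) =o[atTop] fun x => ∑' k, d k * x ^ k := by
  obtain ⟨N, hN⟩ := eventually_atTop.1 hd
  set m := max N (n + 1)
  have hm : 0 < d m := hN m (le_max_left _ _)
  have htail : (fun x : ℝ => x ^ m) =O[atTop] fun x => ∑' k, d (k + m) * x ^ (k + m) := by
    refine IsBigO.of_bound (d m)⁻¹ ?_
    filter_upwards [hsum, eventually_ge_atTop 0] with x hx hx0
    have hterm : ∀ k, 0 ≤ d (k + m) * x ^ (k + m) := fun k =>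
      mul_nonneg (hN _ (by omega)).le (pow_nonneg hx0 _)
    rw [Real.norm_of_nonneg (pow_nonneg hx0 m), Real.norm_of_nonneg (tsum_nonneg hterm),
      le_inv_mul_iff₀ hm]
    simpa using ((summable_nat_add_iff m).2 hx).le_tsum 0 fun k _ => hterm k
  have hsplit : (fun x => ∑' k, d k * x ^ k) ~[atTop]
      fun x => ∑' k, d (k + m) * x ^ (k + m) := by
    refine IsEquivalent.congr_left (IsEquivalent.refl.add_isLittleO
      ((isLittleO_sum_range_mul_pow d m).trans_isBigO htail)) ?_
    filter_upwards [hsum] with x hx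
    rw [Pi.add_apply, add_comm, hx.sum_add_tsum_nat_add m]
  exact ((isLittleO_pow_pow_atTop_of_lt (by omega)).trans_isBigO htail).trans_isEquivalent
    hsplit.symm

theorem isLittleO_tsum_mul_pow (hcd : c =o[atTop] d) (hd : ∀ᶠ k in atTop, 0 < d k)
    (hsum : ∀ᶠ x in atTop, Summable fun k => d k * x ^ k) :
    (fun x : ℝ => ∑' k, c k * x ^ k) =o[atTop] fun x => ∑' k, d k * x ^ k := by
  rw [isLittleO_iff]
  intro ε hε
  obtain ⟨N, hN⟩ := eventually_atTop.1 ((hcd.def (half_pos hε)).and hd)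
  have hhead (e : ℕ → ℝ) : (fun x : ℝ => ∑ k ∈ Finset.range N, e k * x ^ k) =o[atTop]
      fun x => ∑' k, d k * x ^ k :=
    (isLittleO_sum_range_mul_pow e N).trans (isLittleO_pow_tsum_mul_pow hd hsum N)
  filter_upwards [(hhead c).def (by positivity : 0 < ε / 4), (hhead d).def one_half_pos, hsum,
    eventually_ge_atTop 0] with x hheadc hheadd hx hx0
  have hxc : Summable fun k => c k * x ^ k :=
    summable_of_isBigO_nat hx (hcd.isBigO.mul (isBigO_refl _ _))
  have htail : ‖∑' k, c (k + N) * x ^ (k + N)‖ ≤ ε / 2 * ∑' k, d (k + N) * x ^ (k + N) := by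
    refine tsum_of_norm_bounded (((summable_nat_add_iff N).2 hx).hasSum.mul_left (ε / 2))
      fun k => ?_
    obtain ⟨hle, hpos⟩ := hN (k + N) (by omega)
    rw [Real.norm_of_nonneg hpos.le] at hle
    rw [norm_mul, Real.norm_of_nonneg (pow_nonneg hx0 _), ← mul_assoc]
    gcongr
  have hD := hx.sum_add_tsum_nat_add N
  calc ‖∑' k, c k * x ^ k‖
      ≤ ‖∑ k ∈ Finset.range N, c k * x ^ k‖ + ‖∑' k, c (k + N) * x ^ (k + N)‖ := by
        rw [← hxc.sum_add_tsum_nat_add N]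
        exact norm_add_le _ _
    _ ≤ ε / 4 * ‖∑' k, d k * x ^ k‖
          + ε / 2 * (‖∑' k, d k * x ^ k‖ + 1 / 2 * ‖∑' k, d k * x ^ k‖) := by
        gcongr
        refine htail.trans ?_
        gcongr
        linarith [Real.le_norm_self (∑' k, d k * x ^ k), neg_le_of_abs_le hheadd]
    _ = ε * ‖∑' k, d k * x ^ k‖ := by ring

theorem isEquivalent_tsum_mul_pow (hcd : c ~[atTop] d) (hd : ∀ᶠ k in atTop, 0 < d k)
    (hsum : ∀ᶠ x in atTop, Summable fun k => d k * x ^ k) :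
    (fun x : ℝ => ∑' k, c k * x ^ k) ~[atTop] fun x => ∑' k, d k * x ^ k := by
  refine (isLittleO_tsum_mul_pow hcd.isLittleO hd hsum).congr' ?_ EventuallyEq.rfl
  filter_upwards [hsum] with x hx
  have hxc : Summable fun k => c k * x ^ k :=
    summable_of_isBigO_nat hx (hcd.isBigO.mul (isBigO_refl _ _))
  simp only [Pi.sub_apply, sub_mul, hxc.tsum_sub hx]

end PowerSeries

section GammaWeight

/-- The Poisson weight `e^{-s} s^{y-1} / Γ(y)` at a real index `y`: for `y = n + 1` it is the mass
that the Poisson distribution of mean `s` gives to `n`. -/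
noncomputable def gammaWeight (s y : ℝ) : ℝ := Real.exp (-s) * s ^ (y - 1) / Real.Gamma y

lemma gammaWeight_pos {s y : ℝ} (hs : 0 < s) (hy : 0 < y) : 0 < gammaWeight s y := by
  have := Real.Gamma_pos_of_pos hy
  unfold gammaWeight
  positivity

lemma continuousOn_gammaWeight {s : ℝ} (hs : 0 < s) : ContinuousOn (gammaWeight s) (Ioi 0) := by
  refine ContinuousOn.div (continuousOn_const.mul ?_) Real.differentiableOn_Gamma_Ioi.continuousOn
    fun y hy => (Real.Gamma_pos_of_pos hy).ne'
  exact continuousOn_const.rpow (by fun_prop) fun _ _ => Or.inl hs.ne'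

lemma concaveOn_log_gammaWeight {s : ℝ} (hs : 0 < s) :
    ConcaveOn ℝ (Ioi 0) fun y => Real.log (gammaWeight s y) := by
  have hlinear : ConcaveOn ℝ (Ioi 0) fun y : ℝ => y * Real.log s :=
    (LinearMap.mulRight ℝ (Real.log s)).concaveOn (convex_Ioi 0)
  refine ((hlinear.add_const (-s - Real.log s)).sub Real.convexOn_log_Gamma).congr fun y hy => ?_
  have hΓ := Real.Gamma_pos_of_pos hy
  rw [gammaWeight, Real.log_div (by positivity) hΓ.ne', Real.log_mul (by positivity)
    (by positivity), Real.log_exp, Real.log_rpow hs]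
  simp only [Pi.sub_apply, Pi.add_apply, Function.comp_apply]
  ring

lemma quasiconcaveOn_Ici_gammaWeight {s b : ℝ} (hs : 0 < s) (hb : 0 < b) :
    QuasiconcaveOn ℝ (Ici b) (gammaWeight s) := by
  have hpos : ∀ y ∈ Ici b, 0 < gammaWeight s y := fun y hy => gammaWeight_pos hs (hb.trans_le hy)
  have hlog := ((concaveOn_log_gammaWeight hs).subset (Ici_subset_Ioi.2 hb)
    (convex_Ici b)).quasiconcaveOn
  rw [quasiconcaveOn_iff_min_le] at hlog ⊢
  refine ⟨convex_Ici b, fun x hx y hy p q hp hq hpq => ?_⟩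
  have hmin := hlog.2 hx hy hp hq hpq
  rwa [← Real.strictMonoOn_log.monotoneOn.map_min (hpos x hx) (hpos y hy),
    Real.log_le_log_iff (lt_min (hpos x hx) (hpos y hy))
      (hpos _ (convex_Ici b hx hy hp hq hpq))] at hmin

lemma gammaWeight_add_one {s y : ℝ} (hs : 0 < s) (hy : y ≠ 0) :
    gammaWeight s (y + 1) = s / y * gammaWeight s y := by
  rw [gammaWeight, gammaWeight, Real.Gamma_add_one hy, add_sub_right_comm,
    Real.rpow_add_one hs.ne']
  field_simp

lemma hasSum_gammaWeight_nat_add_two (s : ℝ) :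
    HasSum (fun n : ℕ => gammaWeight s (n + 2)) (1 - Real.exp (-s)) := by
  have hexp : HasSum (fun n : ℕ => Real.exp (-s) * (s ^ n / n.factorial)) 1 := by
    have := (NormedSpace.expSeries_div_hasSum_exp s).mul_left (Real.exp (-s))
    rwa [← Real.exp_eq_exp_ℝ, ← Real.exp_add, neg_add_cancel, Real.exp_zero] at this
  convert! (hasSum_nat_add_iff' 1).2 hexp using 1
  · funext n
    rw [gammaWeight, show (n : ℝ) + 2 = ((n + 1 : ℕ) : ℝ) + 1 by push_cast; ring,
      Real.Gamma_nat_eq_factorial, add_sub_cancel_right, Real.rpow_natCast, mul_div_assoc]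
  · simp

lemma rpow_mul_exp_neg_le {s x : ℝ} (hs : 0 < s) (hx : 0 < x) :
    s ^ x * Real.exp (-s) ≤ x ^ x * Real.exp (-x) := by
  rw [Real.rpow_def_of_pos hs, Real.rpow_def_of_pos hx, ← Real.exp_add, ← Real.exp_add,
    Real.exp_le_exp]
  have hlog := Real.log_le_sub_one_of_pos (div_pos hs hx)
  rw [Real.log_div hs.ne' hx.ne', le_sub_iff_add_le, le_div_iff₀ hx] at hlog
  linarith

lemma exp_neg_half_mul_le_rpow_mul_exp_neg {x t : ℝ} (hx : 0 < x) (ht : t ∈ Icc x (x + √x)) :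
    Real.exp (-(1 / 2)) * (x ^ x * Real.exp (-x)) ≤ t ^ x * Real.exp (-t) := by
  obtain ⟨h, rfl⟩ : ∃ h, t = x + h := ⟨t - x, by ring⟩
  have hh : 0 ≤ h := by linarith [ht.1]
  have hsq : h ^ 2 ≤ x := by
    rw [← Real.sq_sqrt hx.le]
    gcongr
    linarith [ht.2]
  have hlog : h - 1 / 2 ≤ x * Real.log (1 + h / x) := calc
    h - 1 / 2 ≤ x * (2 * (h / x) / (h / x + 2)) := by
      rw [show x * (2 * (h / x) / (h / x + 2)) = 2 * h * x / (h + 2 * x) by field_simp,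
        le_div_iff₀ (by positivity)]
      nlinarith
    _ ≤ x * Real.log (1 + h / x) := by
      gcongr
      exact Real.le_log_one_add_of_nonneg (by positivity)
  have hlog_add : Real.log (x + h) = Real.log x + Real.log (1 + h / x) := by
    rw [← Real.log_mul hx.ne' (by positivity)]
    congr 1
    field_simp
  rw [Real.rpow_def_of_pos hx, Real.rpow_def_of_pos (by positivity), ← Real.exp_add,
    ← Real.exp_add, ← Real.exp_add, Real.exp_le_exp, hlog_add]
  linarith

lemma sqrt_mul_rpow_mul_exp_neg_le_Gamma_add_one {x : ℝ} (hx : 0 < x) :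
    √x * (Real.exp (-(1 / 2)) * (x ^ x * Real.exp (-x))) ≤ Real.Gamma (x + 1) := by
  have hconv : IntegrableOn (fun t : ℝ => t ^ x * Real.exp (-t)) (Ioi 0) := by
    simpa [mul_comm] using Real.GammaIntegral_convergent (s := x + 1) (by positivity)
  have hwindow : Icc x (x + √x) ⊆ Ioi 0 := fun t ht => hx.trans_le ht.1
  calc √x * (Real.exp (-(1 / 2)) * (x ^ x * Real.exp (-x)))
      = ∫ _ in Icc x (x + √x), Real.exp (-(1 / 2)) * (x ^ x * Real.exp (-x)) := by
        simp [mul_comm]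
    _ ≤ ∫ t in Icc x (x + √x), t ^ x * Real.exp (-t) :=
        setIntegral_mono_on continuousOn_const.integrableOn_Icc (hconv.mono_set hwindow)
          measurableSet_Icc fun t ht => exp_neg_half_mul_le_rpow_mul_exp_neg hx ht
    _ ≤ ∫ t in Ioi 0, t ^ x * Real.exp (-t) := by
        refine setIntegral_mono_set hconv ?_ hwindow.eventuallyLE
        filter_upwards [ae_restrict_mem measurableSet_Ioi] with t ht
        exact mul_nonneg (Real.rpow_nonneg (mem_Ioi.1 ht).le _) (Real.exp_pos _).le
    _ = Real.Gamma (x + 1) := by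
        rw [Real.Gamma_eq_integral (by positivity)]
        simp [mul_comm]

lemma gammaWeight_add_one_le {s x : ℝ} (hs : 0 < s) (hx : 0 < x) :
    gammaWeight s (x + 1) ≤ Real.exp (1 / 2) / √x := by
  rw [gammaWeight, div_le_div_iff₀ (Real.Gamma_pos_of_pos (by positivity)) (by positivity),
    add_sub_cancel_right]
  calc Real.exp (-s) * s ^ x * √x = √x * (s ^ x * Real.exp (-s)) := by ring
    _ ≤ √x * (x ^ x * Real.exp (-x)) := 
        mul_le_mul_of_nonneg_left (rpow_mul_exp_neg_le hs hx) (Real.sqrt_nonneg x)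
    _ = Real.exp (1 / 2) * (√x * (Real.exp (-(1 / 2)) * (x ^ x * Real.exp (-x)))) := by
        rw [Real.exp_neg (1 / 2)]
        field_simp
    _ ≤ Real.exp (1 / 2) * Real.Gamma (x + 1) := by
        gcongr
        exact sqrt_mul_rpow_mul_exp_neg_le_Gamma_add_one hx

-- With `w = gammaWeight s`, take the geometric mean of the two bounds `w y ≤ C / √(y - 1)` and
-- `w y = (y / s) * w (y + 1) ≤ C * √y / s`.
lemma gammaWeight_le {s y : ℝ} (hs : 0 < s) (hy : 2 ≤ y) :
    gammaWeight s y ≤ √(2 * Real.exp 1 / s) := by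
  have hy0 : 0 < y := by linarith
  have hw := gammaWeight_pos hs hy0
  have hw_le : gammaWeight s y ≤ Real.exp (1 / 2) / √(y / 2) := by
    have := gammaWeight_add_one_le hs (show 0 < y - 1 by linarith)
    rw [sub_add_cancel] at this
    refine this.trans ?_
    gcongr
    linarith
  have hw_le' : gammaWeight s y ≤ y / s * (Real.exp (1 / 2) / √(y / 2)) := by
    have := gammaWeight_add_one_le hs hy0
    rw [gammaWeight_add_one hs hy0.ne'] at this
    calc gammaWeight s y = y / s * (s / y * gammaWeight s y) := by field_simp
      _ ≤ y / s * (Real.exp (1 / 2) / √(y / 2)) := by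
        gcongr
        exact this.trans (by gcongr; linarith)
  apply Real.le_sqrt_of_sq_le
  calc gammaWeight s y ^ 2
      ≤ Real.exp (1 / 2) / √(y / 2) * (y / s * (Real.exp (1 / 2) / √(y / 2))) := by
        rw [sq]
        gcongr
    _ = Real.exp (1 / 2) ^ 2 * (y / (√(y / 2) ^ 2 * s)) := by ring
    _ = 2 * Real.exp 1 / s := by
        rw [Real.sq_sqrt (by positivity), ← Real.exp_nat_mul]
        field_simp
        norm_num

end GammaWeight

section PoissonSums

lemma gammaWeight_mul_natCast_add {s : ℝ} (hs : 0 < s) (a b : ℝ) (k : ℕ) :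
    gammaWeight s (a * k + b)
      = Real.exp (-s) * s ^ (b - 1) * ((Real.Gamma (a * k + b))⁻¹ * (s ^ a) ^ k) := by
  rw [gammaWeight, add_sub_assoc, Real.rpow_add hs, Real.rpow_mul_natCast hs.le]
  ring

lemma tsum_gammaWeight_mul_natCast_add {s : ℝ} (hs : 0 < s) (a b : ℝ) :
    ∑' k : ℕ, gammaWeight s (a * k + b)
      = Real.exp (-s) * s ^ (b - 1) * ∑' k : ℕ, (Real.Gamma (a * k + b))⁻¹ * (s ^ a) ^ k := by
  simp only [gammaWeight_mul_natCast_add hs, tsum_mul_left]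

lemma summable_gammaWeight_mul_natCast_add {s a : ℝ} (hs : 0 < s) (ha : 0 < a) (b : ℝ) :
    Summable fun k : ℕ => gammaWeight s (a * k + b) := by
  simp only [gammaWeight_mul_natCast_add hs]
  exact (summable_inv_Gamma_mul_pow ha b (s ^ a)).mul_left _

lemma abs_mul_tsum_gammaWeight_sub_integral_Ioi_le {s a b : ℝ} (hs : 0 < s) (ha : 0 < a)
    (hb : 2 ≤ b) :
    |a * ∑' k : ℕ, gammaWeight s (a * k + b) - ∫ y in Ioi b, gammaWeight s y|
      ≤ a * √(2 * Real.exp 1 / s) :=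
  have hb0 : 0 < b := two_pos.trans_le hb
  abs_mul_tsum_sub_integral_Ioi_le_of_quasiconcaveOn ha
    (quasiconcaveOn_Ici_gammaWeight hs hb0)
    ((continuousOn_gammaWeight hs).mono (Ici_subset_Ioi.2 hb0))
    (fun _ hy => ⟨(gammaWeight_pos hs (hb0.trans_le hy)).le, gammaWeight_le hs (hb.trans hy)⟩)
    (summable_gammaWeight_mul_natCast_add hs ha b)

lemma integrableOn_Ioi_gammaWeight {s : ℝ} (hs : 0 < s) : IntegrableOn (gammaWeight s) (Ioi 2) :=
  integrableOn_Ioi_of_quasiconcaveOn_of_summable one_pos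
    (quasiconcaveOn_Ici_gammaWeight hs two_pos)
    ((continuousOn_gammaWeight hs).mono (Ici_subset_Ioi.2 two_pos))
    (fun _ hy => ⟨(gammaWeight_pos hs (two_pos.trans_le hy)).le, gammaWeight_le hs hy⟩)
    (summable_gammaWeight_mul_natCast_add hs one_pos 2)

lemma tendsto_const_mul_sqrt_two_mul_exp_one_div (C : ℝ) :
    Tendsto (fun s : ℝ => C * √(2 * Real.exp 1 / s)) atTop (𝓝 0) := by
  simpa using ((tendsto_const_nhds.div_atTop tendsto_id).sqrt).const_mul C

lemma tendsto_integral_Ioi_two_gammaWeight :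
    Tendsto (fun s => ∫ y in Ioi 2, gammaWeight s y) atTop (𝓝 1) := by
  have hsum : Tendsto (fun s => ∑' n : ℕ, gammaWeight s (n + 2)) atTop (𝓝 1) := by
    simp only [(hasSum_gammaWeight_nat_add_two _).tsum_eq]
    simpa using (Real.tendsto_exp_comp_nhds_zero.2 tendsto_neg_atTop_atBot).const_sub 1
  refine hsum.congr_dist ?_
  refine squeeze_zero_norm' ?_ (tendsto_const_mul_sqrt_two_mul_exp_one_div 1)
  filter_upwards [eventually_gt_atTop 0] with s hs
  simpa [Real.dist_eq] using abs_mul_tsum_gammaWeight_sub_integral_Ioi_le hs one_pos le_rfl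

lemma tendsto_integral_Ioi_gammaWeight {b : ℝ} (hb : 2 ≤ b) :
    Tendsto (fun s => ∫ y in Ioi b, gammaWeight s y) atTop (𝓝 1) := by
  refine tendsto_integral_Ioi_two_gammaWeight.congr_dist ?_
  refine squeeze_zero_norm' ?_ (tendsto_const_mul_sqrt_two_mul_exp_one_div |b - 2|)
  filter_upwards [eventually_gt_atTop 0] with s hs
  have hint := integrableOn_Ioi_gammaWeight hs
  rw [Real.dist_eq, norm_abs_eq_norm, intervalIntegral.integral_Ioi_sub_Ioi hint hb, mul_comm]
  refine intervalIntegral.norm_integral_le_of_norm_le_const fun y hy => ?_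
  rw [uIoc_of_le hb] at hy
  rw [Real.norm_of_nonneg (gammaWeight_pos hs (two_pos.trans hy.1)).le]
  exact gammaWeight_le hs hy.1.le

theorem tendsto_mul_tsum_gammaWeight {a b : ℝ} (ha : 0 < a) (hb : 2 ≤ b) :
    Tendsto (fun s => a * ∑' k : ℕ, gammaWeight s (a * k + b)) atTop (𝓝 1) := by
  refine (tendsto_integral_Ioi_gammaWeight hb).congr_dist ?_
  refine squeeze_zero_norm' ?_ (tendsto_const_mul_sqrt_two_mul_exp_one_div a)
  filter_upwards [eventually_gt_atTop 0] with s hs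
  rw [dist_comm, Real.dist_eq, norm_abs_eq_norm, Real.norm_eq_abs]
  exact abs_mul_tsum_gammaWeight_sub_integral_Ioi_le hs ha hb

end PoissonSums

section MittagLeffler

/-- The two-parameter Mittag-Leffler function `E_{α,β}(x) = ∑_{k≥0} x^k / Γ(αk+β)`, the case
`γ = 1` of the Prabhakar function. It is defined for all real `β`: since `Γ` takes the value `0` at
its poles, `(Γ y)⁻¹` is everywhere the value of the entire function `1 / Γ`. -/
noncomputable def mittagLeffler (α β x : ℝ) : ℝ := ∑' k : ℕ, (Real.Gamma (α * k + β))⁻¹ * x ^ k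

lemma mittagLeffler_eq_inv_Gamma_add {α : ℝ} (hα : 0 < α) (β x : ℝ) :
    mittagLeffler α β x = (Real.Gamma β)⁻¹ + x * mittagLeffler α (β + α) x := by
  rw [mittagLeffler, (summable_inv_Gamma_mul_pow hα β x).tsum_eq_zero_add, mittagLeffler,
    ← tsum_mul_left]
  congr 1
  · simp
  · congr! 2 with k
    rw [Nat.cast_succ, mul_add_one, add_right_comm, add_assoc, pow_succ]
    ring

lemma tendsto_rpow_mul_exp_rpow_atTop (p : ℝ) {r : ℝ} (hr : 0 < r) :
    Tendsto (fun x : ℝ => x ^ p * Real.exp (x ^ r)) atTop atTop := by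
  refine ((tendsto_exp_mul_div_rpow_atTop (-p / r) 1 one_pos).comp
    (tendsto_rpow_atTop hr)).congr' ?_
  filter_upwards [eventually_gt_atTop 0] with x hx
  rw [Function.comp_apply, ← Real.rpow_mul hx.le, mul_div_cancel₀ _ hr.ne', Real.rpow_neg hx.le,
    div_inv_eq_mul, one_mul, mul_comm]

lemma isEquivalent_mittagLeffler_of_two_le {α β : ℝ} (hα : 0 < α) (hβ : 2 ≤ β) :
    mittagLeffler α β ~[atTop] fun x => α⁻¹ * (x ^ ((1 - β) / α) * Real.exp (x ^ (1 / α))) := by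
  apply isEquivalent_of_tendsto_one
  refine ((tendsto_mul_tsum_gammaWeight hα hβ).comp
    (tendsto_rpow_atTop (one_div_pos.2 hα))).congr' ?_
  filter_upwards [eventually_gt_atTop 0] with x hx
  have hroot : (x ^ (1 / α)) ^ α = x := by
    rw [← Real.rpow_mul hx.le, one_div_mul_cancel hα.ne', Real.rpow_one]
  have hpow : (x ^ (1 / α)) ^ (β - 1) = (x ^ ((1 - β) / α))⁻¹ := by
    rw [← Real.rpow_mul hx.le, ← Real.rpow_neg hx.le]
    congr 1
    ring
  rw [Function.comp_apply, tsum_gammaWeight_mul_natCast_add (by positivity), hroot, hpow,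
    ← mittagLeffler, Real.exp_neg, Pi.div_apply]
  field_simp

lemma isEquivalent_mittagLeffler_of_add {α β : ℝ} (hα : 0 < α)
    (h : mittagLeffler α (β + α) ~[atTop]
      fun x => α⁻¹ * (x ^ ((1 - (β + α)) / α) * Real.exp (x ^ (1 / α)))) :
    mittagLeffler α β ~[atTop] fun x => α⁻¹ * (x ^ ((1 - β) / α) * Real.exp (x ^ (1 / α))) := by
  have hgrow := (tendsto_rpow_mul_exp_rpow_atTop ((1 - β) / α)
    (one_div_pos.2 hα)).const_mul_atTop (inv_pos.2 hα)
  have hmul : (fun x => x * mittagLeffler α (β + α) x) ~[atTop]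
      fun x => α⁻¹ * (x ^ ((1 - β) / α) * Real.exp (x ^ (1 / α))) := by
    refine ((IsEquivalent.refl (u := fun x : ℝ => x)).mul h).congr_right ?_
    filter_upwards [eventually_gt_atTop 0] with x hx
    rw [Pi.mul_apply, show (1 - β) / α = (1 - (β + α)) / α + 1 by field_simp; ring,
      Real.rpow_add_one hx.ne']
    ring
  refine (((isLittleO_const_left.2 (Or.inr (tendsto_norm_atTop_atTop.comp hgrow))).add_isEquivalent
    hmul).congr_left (Eventually.of_forall fun x =>
      (mittagLeffler_eq_inv_Gamma_add hα β x).symm))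

theorem isEquivalent_mittagLeffler {α : ℝ} (hα : 0 < α) (β : ℝ) :
    mittagLeffler α β ~[atTop] fun x => α⁻¹ * (x ^ ((1 - β) / α) * Real.exp (x ^ (1 / α))) := by
  obtain ⟨n, hn⟩ := exists_nat_ge ((2 - β) / α)
  rw [div_le_iff₀ hα] at hn
  induction n generalizing β with
  | zero => exact isEquivalent_mittagLeffler_of_two_le hα (by simpa using hn)
  | succ n ih =>
    refine isEquivalent_mittagLeffler_of_add hα (ih _ ?_)
    push_cast at hn
    linarith

end MittagLeffler

section Prabhakar

lemma eval_ascPochhammer_mul_Gamma {γ : ℝ} (hγ : ∀ m : ℕ, γ ≠ -m) (k : ℕ) :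
    (ascPochhammer ℝ k).eval γ * Real.Gamma γ = Real.Gamma (k + γ) := by
  induction k with
  | zero => simp
  | succ k ih =>
    have hk : (k : ℝ) + γ ≠ 0 := fun h => hγ k (by linarith)
    rw [ascPochhammer_succ_eval, Nat.cast_succ, add_right_comm, Real.Gamma_add_one hk, ← ih]
    ring

lemma isEquivalent_prabhakar_coeff {α γ : ℝ} (hα : 0 < α) (β : ℝ) (hγ : ∀ m : ℕ, γ ≠ -m) :
    (fun k : ℕ => α ^ (γ - 1) * Real.Gamma γ *
      ((ascPochhammer ℝ k).eval γ / (k.factorial * Real.Gamma (α * k + β)))) ~[atTop]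
      fun k : ℕ => (Real.Gamma (α * k + (β + 1 - γ)))⁻¹ := by
  have harg : Tendsto (fun k : ℕ => α * k) atTop atTop :=
    tendsto_natCast_atTop_atTop.const_mul_atTop hα
  have hbinom := (isEquivalent_Gamma_add_div_Gamma_add γ 1).comp_tendsto
    tendsto_natCast_atTop_atTop
  have hshift := (isEquivalent_Gamma_add_div_Gamma_add (β + 1 - γ) β).comp_tendsto harg
  have hprod := ((IsEquivalent.refl (u := fun _ : ℕ => α ^ (γ - 1))).mul (hbinom.mul hshift)).mul
    (IsEquivalent.refl (u := fun k : ℕ => (Real.Gamma (α * k + (β + 1 - γ)))⁻¹))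
  refine (hprod.congr_left ?_).congr_right ?_
  · filter_upwards [harg.eventually_gt_atTop (-(β + 1 - γ))] with k hk
    have hΓ := (Real.Gamma_pos_of_pos (neg_lt_iff_pos_add.1 hk)).ne'
    simp only [Pi.mul_apply, Function.comp_apply, ← eval_ascPochhammer_mul_Gamma hγ,
      Real.Gamma_nat_eq_factorial]
    field_simp
  · filter_upwards [eventually_gt_atTop 0] with k hk
    have hk' : (0 : ℝ) < k := by positivity
    simp only [Pi.mul_apply, Function.comp_apply]
    rw [show β + 1 - γ - β = -(γ - 1) by ring, Real.rpow_neg (by positivity),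
      Real.mul_rpow hα.le hk'.le]
    field_simp

theorem isEquivalent_prabhakar {α γ : ℝ} (hα : 0 < α) (β : ℝ) (hγ : ∀ m : ℕ, γ ≠ -m) :
    prabhakar α β γ ~[atTop]
      fun x => (α ^ γ * Real.Gamma γ)⁻¹ * (x ^ ((γ - β) / α) * Real.exp (x ^ (1 / α))) := by
  have hpos : ∀ᶠ k : ℕ in atTop, 0 < (Real.Gamma (α * k + (β + 1 - γ)))⁻¹ := by
    filter_upwards [(tendsto_natCast_atTop_atTop.const_mul_atTop hα).eventually_gt_atTop
      (-(β + 1 - γ))] with k hk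
    exact inv_pos.2 (Real.Gamma_pos_of_pos (neg_lt_iff_pos_add.1 hk))
  have hseries := isEquivalent_tsum_mul_pow (isEquivalent_prabhakar_coeff hα β hγ) hpos
    (Eventually.of_forall (summable_inv_Gamma_mul_pow hα _))
  have hscaled := (IsEquivalent.refl (u := fun _ : ℝ => (α ^ (γ - 1) * Real.Gamma γ)⁻¹)).mul
    (hseries.trans (isEquivalent_mittagLeffler hα (β + 1 - γ)))
  have hΓ := Real.Gamma_ne_zero hγ
  refine (hscaled.congr_left (Eventually.of_forall fun x => ?_)).congr_right
    (Eventually.of_forall fun x => ?_)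
  · simp only [Pi.mul_apply, mul_assoc (α ^ (γ - 1) * Real.Gamma γ), tsum_mul_left]
    rw [inv_mul_cancel_left₀ (by positivity), prabhakar]
    congr! 2 with k
    ring
  · rw [Pi.mul_apply, Real.rpow_sub_one hα.ne', show 1 - (β + 1 - γ) = γ - β by ring]
    field_simp

lemma isEquivalent_prabhakar_mul_div_prabhakar {ι : Type*} {l : Filter ι} {α γ : ℝ} (hα : 0 < α)
    (β : ℝ) (hγ : ∀ m : ℕ, γ ≠ -m) {x u : ι → ℝ} (hx : Tendsto x l atTop)
    (hu : Tendsto u l (𝓝 1)) :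
    (fun t => prabhakar α β γ (x t * u t) / prabhakar α β γ (x t)) ~[l]
      fun t => Real.exp (x t ^ (1 / α) * (u t ^ (1 / α) - 1)) := by
  have hxu : Tendsto (fun t => x t * u t) l atTop := hx.atTop_mul_pos one_pos hu
  have hpower : (fun t => u t ^ ((γ - β) / α)) ~[l] fun _ => 1 := by
    refine (isEquivalent_const_iff_tendsto one_ne_zero).2 ?_
    simpa using hu.rpow_const (p := (γ - β) / α) (Or.inl one_ne_zero)
  have hasymp := isEquivalent_prabhakar hα β hγ
  have hratio : (fun t => prabhakar α β γ (x t * u t) / prabhakar α β γ (x t)) ~[l]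
      fun t => u t ^ ((γ - β) / α) * Real.exp (x t ^ (1 / α) * (u t ^ (1 / α) - 1)) := by
    refine ((hasymp.comp_tendsto hxu).div (hasymp.comp_tendsto hx)).congr_right ?_
    filter_upwards [hx.eventually_gt_atTop 0, hu.eventually_const_lt one_pos] with t hxt hut
    have hΓ := Real.Gamma_ne_zero hγ
    simp only [Pi.div_apply, Function.comp_apply, Real.mul_rpow hxt.le hut.le, mul_sub, mul_one,
      Real.exp_sub]
    field_simp
  exact (hratio.trans (hpower.mul IsEquivalent.refl)).congr_right
    (Eventually.of_forall fun _ => one_mul _)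

end Prabhakar

theorem H1_limit_prabhakar_general {ι : Type*} {l : Filter ι} {α β γ lam : ℝ} (hα : 0 < α)
    (hγ : ∀ m : ℕ, γ ≠ -m) (hlam : 0 < lam) {δ u : ι → ℝ} (hδ : Tendsto δ l atTop)
    (hu : Tendsto u l (𝓝 1)) :
    Tendsto (fun t =>
        Real.log (prabhakar α β γ (lam * u t * δ t) / prabhakar α β γ (lam * δ t))
          - (lam * δ t) ^ (1 / α) * (u t ^ (1 / α) - 1)) l (𝓝 0) := by
  have hequiv := isEquivalent_prabhakar_mul_div_prabhakar hα β hγ (hδ.const_mul_atTop hlam) hu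
  have hratio := (isEquivalent_iff_tendsto_one
    (Eventually.of_forall fun _ => Real.exp_ne_zero _)).1 hequiv
  have hlog := hratio.log one_ne_zero
  rw [Real.log_one] at hlog
  refine hlog.congr' ?_
  filter_upwards [hratio.eventually_ne one_ne_zero] with t ht
  rw [Pi.div_apply, Real.log_div (left_ne_zero_of_mul ht) (Real.exp_ne_zero _), Real.log_exp,
    mul_right_comm]

/-- Boundedness (indeed convergence to `0`) of `H1(t)` in Section 4.1 of the paper:
for `α ∈ (0,1]`, `β > 0`, `λ > 0`, a positive integer `γ`, and functions `δ(t) → ∞`,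
`u(t) → 1`, one has
`log(E^γ_{α,β}(λu(t)δ(t)) / E^γ_{α,β}(λδ(t))) - (λδ(t))^{1/α}((u(t))^{1/α} - 1) → 0`. -/
theorem H1_limit_prabhakar
    (α β lam : ℝ) (γ : ℕ)
    (hα : α ∈ Set.Ioc (0 : ℝ) 1) (hβ : 0 < β) (hlam : 0 < lam) (hγ : 1 ≤ γ)
    (δ u : ℝ → ℝ)
    (hδpos : ∀ t : ℝ, 0 < t → 0 < δ t) (hupos : ∀ t : ℝ, 0 < t → 0 < u t)
    (hδ : Tendsto δ atTop atTop) (hu : Tendsto u atTop (𝓝 1)) :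
    Tendsto (fun t : ℝ =>
        Real.log (prabhakar α β (γ : ℝ) (lam * u t * δ t) / prabhakar α β (γ : ℝ) (lam * δ t))
          - (lam * δ t) ^ (1 / α) * ((u t) ^ (1 / α) - 1))
      atTop (𝓝 0) := by
  have hγ_ne (m : ℕ) : (γ : ℝ) ≠ -m :=
    ((neg_nonpos.2 m.cast_nonneg).trans_lt (Nat.cast_pos.2 hγ)).ne'
  exact H1_limit_prabhakar_general hα.1 hγ_ne hlam hδ hu
end
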